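/- Let n be a positive integer and write 2n+5 = 3^β·n₁ with n₁ a positive integer not divisible by 3. Then t(1,3,4,12;n) = 2·(σ(n₁) − (−1)^n·a(2n+5)). -/

import Mathlib

/-!
Put `N = 2n + 5`. For `D, j ≥ 0` let `r(j)` be the number of representations of `j` by `x² + 3y²`,
and `T(D)` the number of representations of `4D` by `X² + 3Y²` with `X`, `Y` odd. Completing
squares gives `t(1,3,4,12;n) = ∑ T(i) T(D)` over `i + 4D = N` (`tquad_eq`).
Since `r(4D) = r(D) + T(D)`, while `T(D)` is `2 r(D)` or `0` according to the parity of `D`,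
always `2 T(D) = r(4D) - (-1)^D r(D)`, so that (`two_mul_tquad`)

  `2 t(1,3,4,12;n) = ∑_{i+j=N} T(i) r(j) - ∑_{i+4D=N} T(i) (-1)^D r(D)`.

The first sum is the Eisenstein part. A change of variables makes it a quarter of
`∑_{i+j=2N} T(i) T(j)` (`sum_tcard_mul_tcard`). By Dirichlet's formula `r(i) = 2 ∑_{d∣i} χ₋₃(d)`
for odd `i` (`sol_eq_esum`), this is a convolution of divisor sums of the character modulo `3`.
Bijections in the style of Liouville evaluate it: writing `χ₋₃(a) χ₋₃(b)` as the indicator of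
`a ≡ b` minus that of `3 ∣ a + b`, the solutions of `a x + b y = 2N` off the diagonals `a = b`,
`x = y` cancel, and the diagonals leave `∑_{d∣N, 3∤d} d = σ(n₁)` (`sum_esum_mul_esum`).

The second sum is the cuspidal part, equal to `4 (-1)^n a(N)` (`four_mul_cuspCoeff`). Indeed
Jacobi's triple product identity gives `∏ (1 - xᵏ)(1 - x²ᵏ) = ψ(-x) φ(-x²)` (`euler_mul_euler`),
where `φ(x) = ∑ x^(k²)` and `ψ(x) = ∑ x^(2k²-k)` over all integers `k`. So the eta quotient is
`q ψ(-q²) ψ(-q⁶) φ(-q⁴) φ(-q¹²)` (`hasSum_cuspCoeff`), and uniqueness of power series expansions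
identifies its coefficients with `a` (`eq_of_tsum_eq`).
-/

open scoped BigOperators

/-- `Nquad a b c d n` is the number of quadruples `(x,y,z,w) ∈ ℤ⁴` with
`n = a*x^2 + b*y^2 + c*z^2 + d*w^2`. -/
noncomputable def Nquad (a b c d : ℕ) (n : ℕ) : ℕ :=
  Nat.card {p : ℤ × ℤ × ℤ × ℤ //
    (n : ℤ) = a * p.1 ^ 2 + b * p.2.1 ^ 2 + c * p.2.2.1 ^ 2 + d * p.2.2.2 ^ 2}

/-- `tquad a b c d n` is the number of quadruples `(x,y,z,w) ∈ ℤ⁴` with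
`n = a*x(x-1)/2 + b*y(y-1)/2 + c*z(z-1)/2 + d*w(w-1)/2`. -/
noncomputable def tquad (a b c d : ℕ) (n : ℕ) : ℕ :=
  Nat.card {p : ℤ × ℤ × ℤ × ℤ //
    (n : ℤ) = a * (p.1 * (p.1 - 1) / 2) + b * (p.2.1 * (p.2.1 - 1) / 2)
      + c * (p.2.2.1 * (p.2.2.1 - 1) / 2) + d * (p.2.2.2 * (p.2.2.2 - 1) / 2)}

/-! ### A convolution of character divisor sums -/

/-- The nontrivial character modulo `3`. -/
def chi3 (n : ℕ) : ℤ := if n % 3 = 1 then 1 else if n % 3 = 2 then -1 else 0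

/-- The divisor sum `∑_{d ∣ n} χ₋₃(d)`. -/
def esum (n : ℕ) : ℤ := ∑ d ∈ n.divisors, chi3 d

/-- The quadruples `(a, x, b, y)` of positive integers with `a x + b y = M`. -/
def quads (M : ℕ) : Finset (ℕ × ℕ × ℕ × ℕ) :=
  (Finset.range (M + 1) ×ˢ Finset.range (M + 1) ×ˢ Finset.range (M + 1) ×ˢ
    Finset.range (M + 1)).filter fun p =>
      0 < p.1 ∧ 0 < p.2.1 ∧ 0 < p.2.2.1 ∧ 0 < p.2.2.2 ∧ p.1 * p.2.1 + p.2.2.1 * p.2.2.2 = M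

lemma mem_quads {M a x b y : ℕ} :
    (a, x, b, y) ∈ quads M ↔ 0 < a ∧ 0 < x ∧ 0 < b ∧ 0 < y ∧ a * x + b * y = M := by
  simp only [quads, Finset.mem_filter, Finset.mem_product, Finset.mem_range]
  constructor
  · rintro ⟨_, h⟩; exact h
  · rintro ⟨ha, hx, hb, hy, h⟩
    refine ⟨⟨?_, ?_, ?_, ?_⟩, ha, hx, hb, hy, h⟩ <;> nlinarith

/-- The quadruples in `quads M` with all four entries odd. -/
def oddQuads (M : ℕ) : Finset (ℕ × ℕ × ℕ × ℕ) :=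
  (quads M).filter fun p => Odd p.1 ∧ Odd p.2.1 ∧ Odd p.2.2.1 ∧ Odd p.2.2.2

lemma mem_oddQuads {M a x b y : ℕ} :
    (a, x, b, y) ∈ oddQuads M ↔
      Odd a ∧ Odd x ∧ Odd b ∧ Odd y ∧ a * x + b * y = M := by
  simp only [oddQuads, Finset.mem_filter, mem_quads]
  constructor
  · tauto
  · rintro ⟨ha, hx, hb, hy, h⟩
    exact ⟨⟨ha.pos, hx.pos, hb.pos, hy.pos, h⟩, ha, hx, hb, hy⟩

/-- The quadruples `(k, x, b, s)` in `quads M` with `k`, `s` even, `x`, `b` odd and `3 ∣ k`. -/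
def mixedQuads (M : ℕ) : Finset (ℕ × ℕ × ℕ × ℕ) :=
  (quads M).filter fun p => Even p.1 ∧ Odd p.2.1 ∧ Odd p.2.2.1 ∧ Even p.2.2.2 ∧ 3 ∣ p.1

lemma mem_mixedQuads {M k x b s : ℕ} :
    (k, x, b, s) ∈ mixedQuads M ↔
      0 < k ∧ 0 < s ∧ Even k ∧ Odd x ∧ Odd b ∧ Even s ∧ 3 ∣ k ∧ k * x + b * s = M := by
  simp only [mixedQuads, Finset.mem_filter, mem_quads]
  constructor
  · tauto
  · rintro ⟨hk, hs, hk', hx, hb, hs', h3, h⟩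
    exact ⟨⟨hk, hx.pos, hb.pos, hs, h⟩, hk', hx, hb, hs', h3⟩

/-- The bijection `(k, x, b, s) ↦ (k, x - s, b + k, s)` preserves `k x + b s`. -/
lemma card_mixed_lt_gt (M : ℕ) :
    ((mixedQuads M).filter fun p => p.2.2.2 < p.2.1).card =
      ((mixedQuads M).filter fun p => p.1 < p.2.2.1).card := by
  refine Finset.card_nbij' (fun p => (p.1, p.2.1 - p.2.2.2, p.2.2.1 + p.1, p.2.2.2))
    (fun p => (p.1, p.2.1 + p.2.2.2, p.2.2.1 - p.1, p.2.2.2)) ?_ ?_ ?_ ?_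
  · rintro ⟨k, x, b, s⟩ h
    simp only [Finset.coe_filter, Set.mem_ofPred_eq, mem_mixedQuads] at h ⊢
    obtain ⟨⟨hk, hs, hk', hx, hb, hs', h3, h⟩, hlt⟩ := h
    obtain ⟨c, rfl⟩ := Nat.exists_eq_add_of_lt hlt
    refine ⟨⟨hk, hs, hk', ?_, by grind, hs', h3, ?_⟩, by have := hb.pos; omega⟩
    · grind
    · rw [← h, show s + c + 1 - s = c + 1 by omega]; ring
  · rintro ⟨k, x, b, s⟩ h
    simp only [Finset.coe_filter, Set.mem_ofPred_eq, mem_mixedQuads] at h ⊢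
    obtain ⟨⟨hk, hs, hk', hx, hb, hs', h3, h⟩, hlt⟩ := h
    obtain ⟨c, rfl⟩ := Nat.exists_eq_add_of_lt hlt
    refine ⟨⟨hk, hs, hk', by grind, ?_, hs', h3, ?_⟩, by have := hx.pos; omega⟩
    · grind
    · rw [← h, show k + c + 1 - k = c + 1 by omega]; ring
  · rintro ⟨k, x, b, s⟩ h
    simp only [Finset.coe_filter, Set.mem_ofPred_eq] at h
    simp; omega
  · rintro ⟨k, x, b, s⟩ h
    simp only [Finset.coe_filter, Set.mem_ofPred_eq] at h
    simp; omega

/-- By parity `x ≠ s` and `b ≠ k`, so this is the complement of `card_mixed_lt_gt`. -/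
lemma card_mixed_gt_lt (M : ℕ) :
    ((mixedQuads M).filter fun p => p.2.1 < p.2.2.2).card =
      ((mixedQuads M).filter fun p => p.2.2.1 < p.1).card := by
  have h1 := Finset.card_filter_add_card_filter_not (s := mixedQuads M)
    (fun p => p.2.2.2 < p.2.1)
  have h2 := Finset.card_filter_add_card_filter_not (s := mixedQuads M)
    (fun p => p.1 < p.2.2.1)
  have h3 : (mixedQuads M).filter (fun p => ¬ p.2.2.2 < p.2.1) =
      (mixedQuads M).filter (fun p => p.2.1 < p.2.2.2) := by
    apply Finset.filter_congr
    rintro ⟨k, x, b, s⟩ h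
    rw [mem_mixedQuads] at h
    grind
  have h4 : (mixedQuads M).filter (fun p => ¬ p.1 < p.2.2.1) =
      (mixedQuads M).filter (fun p => p.2.2.1 < p.1) := by
    apply Finset.filter_congr
    rintro ⟨k, x, b, s⟩ h
    rw [mem_mixedQuads] at h
    grind
  rw [h3] at h1
  rw [h4] at h2
  have := card_mixed_lt_gt M
  omega

/-- The pairs with `a > b` and `a ≡ b` modulo `3` go to `mixedQuads` by
`(a, x, b, y) ↦ (a - b, x, b, x + y)`, since `a x + b y = (a - b) x + b (x + y)`. -/
lemma card_odd_a_gt (M : ℕ) :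
    ((oddQuads M).filter fun p => p.2.2.1 < p.1 ∧ 3 ∣ p.1 - p.2.2.1).card =
      ((mixedQuads M).filter fun p => p.2.1 < p.2.2.2).card := by
  refine Finset.card_nbij' (fun p => (p.1 - p.2.2.1, p.2.1, p.2.2.1, p.2.1 + p.2.2.2))
    (fun p => (p.1 + p.2.2.1, p.2.1, p.2.2.1, p.2.2.2 - p.2.1)) ?_ ?_ ?_ ?_
  · rintro ⟨a, x, b, y⟩ h
    simp only [Finset.coe_filter, Set.mem_ofPred_eq, mem_oddQuads, mem_mixedQuads] at h ⊢
    obtain ⟨⟨ha, hx, hb, hy, h⟩, hlt, h3⟩ := h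
    obtain ⟨c, rfl⟩ := Nat.exists_eq_add_of_lt hlt
    rw [show b + c + 1 - b = c + 1 by omega] at *
    have := hy.pos
    refine ⟨⟨by omega, by omega, by grind, hx, hb, by grind, h3, ?_⟩, by omega⟩
    rw [← h]; ring
  · rintro ⟨k, x, b, s⟩ h
    simp only [Finset.coe_filter, Set.mem_ofPred_eq, mem_oddQuads, mem_mixedQuads] at h ⊢
    obtain ⟨⟨hk, hs, hk', hx, hb, hs', h3, h⟩, hlt⟩ := h
    obtain ⟨c, rfl⟩ := Nat.exists_eq_add_of_lt hlt
    rw [show x + c + 1 - x = c + 1 by omega] at *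
    refine ⟨⟨by grind, hx, hb, by grind, ?_⟩, by omega, by simpa using h3⟩
    rw [← h]; ring
  · rintro ⟨k, x, b, s⟩ h
    simp only [Finset.coe_filter, Set.mem_ofPred_eq] at h
    simp; omega
  · rintro ⟨k, x, b, s⟩ h
    simp only [Finset.coe_filter, Set.mem_ofPred_eq] at h
    simp; omega

/-- The pairs with `x > y` and `3 ∣ a + b` go to `mixedQuads` by
`(a, x, b, y) ↦ (a + b, y, a, x - y)`, since `a x + b y = (a + b) y + a (x - y)`. -/
lemma card_odd_x_gt (M : ℕ) :
    ((oddQuads M).filter fun p => p.2.2.2 < p.2.1 ∧ 3 ∣ p.1 + p.2.2.1).card =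
      ((mixedQuads M).filter fun p => p.2.2.1 < p.1).card := by
  refine Finset.card_nbij' (fun p => (p.1 + p.2.2.1, p.2.2.2, p.1, p.2.1 - p.2.2.2))
    (fun p => (p.2.2.1, p.2.1 + p.2.2.2, p.1 - p.2.2.1, p.2.1)) ?_ ?_ ?_ ?_
  · rintro ⟨a, x, b, y⟩ h
    simp only [Finset.coe_filter, Set.mem_ofPred_eq, mem_oddQuads, mem_mixedQuads] at h ⊢
    obtain ⟨⟨ha, hx, hb, hy, h⟩, hlt, h3⟩ := h
    obtain ⟨c, rfl⟩ := Nat.exists_eq_add_of_lt hlt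
    rw [show y + c + 1 - y = c + 1 by omega] at *
    have := hb.pos
    refine ⟨⟨by omega, by omega, by grind, hy, ha, by grind, h3, ?_⟩, by omega⟩
    rw [← h]; ring
  · rintro ⟨k, x, b, s⟩ h
    simp only [Finset.coe_filter, Set.mem_ofPred_eq, mem_oddQuads, mem_mixedQuads] at h ⊢
    obtain ⟨⟨hk, hs, hk', hx, hb, hs', h3, h⟩, hlt⟩ := h
    obtain ⟨c, rfl⟩ := Nat.exists_eq_add_of_lt hlt
    rw [show b + c + 1 - b = c + 1 by omega] at *
    refine ⟨⟨hb, by grind, by grind, hx, ?_⟩, by omega, ?_⟩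
    · rw [← h]; ring
    · rwa [show b + (c + 1) = b + c + 1 by ring]
  · rintro ⟨k, x, b, s⟩ h
    simp only [Finset.coe_filter, Set.mem_ofPred_eq] at h
    simp; omega
  · rintro ⟨k, x, b, s⟩ h
    simp only [Finset.coe_filter, Set.mem_ofPred_eq] at h
    simp; omega

lemma chi3_mul_chi3 (a b : ℕ) :
    chi3 a * chi3 b = (if a % 3 = b % 3 then 1 else 0) - (if 3 ∣ a + b then 1 else 0) := by
  unfold chi3
  have ha := Nat.mod_lt a (show 0 < 3 by norm_num)
  have hb := Nat.mod_lt b (show 0 < 3 by norm_num)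
  simp only [Nat.dvd_iff_mod_eq_zero, Nat.add_mod a b]
  generalize a % 3 = u at *
  generalize b % 3 = v at *
  interval_cases u <;> interval_cases v <;> simp

/-- The symmetry `(a, x) ↔ (b, y)` of `oddQuads`. -/
lemma card_odd_swap (M : ℕ) (P : ℕ → ℕ → ℕ → ℕ → Prop)
    [∀ a x b y, Decidable (P a x b y)] :
    ((oddQuads M).filter fun p => P p.1 p.2.1 p.2.2.1 p.2.2.2).card =
      ((oddQuads M).filter fun p => P p.2.2.1 p.2.2.2 p.1 p.2.1).card := by
  refine Finset.card_nbij' (fun p => (p.2.2.1, p.2.2.2, p.1, p.2.1))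
    (fun p => (p.2.2.1, p.2.2.2, p.1, p.2.1)) ?_ ?_ ?_ ?_
  · rintro ⟨a, x, b, y⟩ h
    simp only [Finset.coe_filter, Set.mem_ofPred_eq, mem_oddQuads] at h ⊢
    exact ⟨⟨h.1.2.2.1, h.1.2.2.2.1, h.1.1, h.1.2.1, by rw [← h.1.2.2.2.2]; ring⟩, h.2⟩
  · rintro ⟨a, x, b, y⟩ h
    simp only [Finset.coe_filter, Set.mem_ofPred_eq, mem_oddQuads] at h ⊢
    exact ⟨⟨h.1.2.2.1, h.1.2.2.2.1, h.1.1, h.1.2.1, by rw [← h.1.2.2.2.2]; ring⟩, h.2⟩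
  · rintro ⟨a, x, b, y⟩ _; rfl
  · rintro ⟨a, x, b, y⟩ _; rfl

/-- The symmetry `(a, b) ↔ (x, y)` of `oddQuads`. -/
lemma card_odd_transpose (M : ℕ) (P : ℕ → ℕ → ℕ → ℕ → Prop)
    [∀ a x b y, Decidable (P a x b y)] :
    ((oddQuads M).filter fun p => P p.1 p.2.1 p.2.2.1 p.2.2.2).card =
      ((oddQuads M).filter fun p => P p.2.1 p.1 p.2.2.2 p.2.2.1).card := by
  refine Finset.card_nbij' (fun p => (p.2.1, p.1, p.2.2.2, p.2.2.1))
    (fun p => (p.2.1, p.1, p.2.2.2, p.2.2.1)) ?_ ?_ ?_ ?_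
  · rintro ⟨a, x, b, y⟩ h
    simp only [Finset.coe_filter, Set.mem_ofPred_eq, mem_oddQuads] at h ⊢
    exact ⟨⟨h.1.2.1, h.1.1, h.1.2.2.2.1, h.1.2.2.1, by rw [← h.1.2.2.2.2]; ring⟩, h.2⟩
  · rintro ⟨a, x, b, y⟩ h
    simp only [Finset.coe_filter, Set.mem_ofPred_eq, mem_oddQuads] at h ⊢
    exact ⟨⟨h.1.2.1, h.1.1, h.1.2.2.2.1, h.1.2.2.1, by rw [← h.1.2.2.2.2]; ring⟩, h.2⟩
  · rintro ⟨a, x, b, y⟩ _; rfl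
  · rintro ⟨a, x, b, y⟩ _; rfl

/-- The diagonal `x = y`: with `a + b = 2d` the equation reads `d x = N`, and `a` runs over
the `d` odd numbers below `2d`. -/
lemma card_odd_diag {N : ℕ} (hN : Odd N) (P : ℕ → Prop) [DecidablePred P] :
    ((oddQuads (2 * N)).filter fun p => p.2.1 = p.2.2.2 ∧ P (p.1 + p.2.2.1)).card =
      ∑ d ∈ N.divisors.filter (fun d => P (2 * d)), d := by
  have : ∑ d ∈ N.divisors.filter (fun d => P (2 * d)), d =
      ((N.divisors.filter (fun d => P (2 * d))).sigma fun d => Finset.range d).card := by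
    rw [Finset.card_sigma]; simp
  rw [this]
  refine Finset.card_nbij' (fun p => ⟨(p.1 + p.2.2.1) / 2, p.1 / 2⟩)
    (fun q => (2 * q.2 + 1, N / q.1, 2 * (q.1 - q.2) - 1, N / q.1)) ?_ ?_ ?_ ?_
  · rintro ⟨a, x, b, y⟩ h
    simp only [Finset.coe_filter, Set.mem_ofPred_eq, mem_oddQuads] at h
    obtain ⟨⟨⟨i, rfl⟩, hx, ⟨j, rfl⟩, hy, h⟩, rfl, hP⟩ := h
    have e1 : (2 * i + 1 + (2 * j + 1)) / 2 = i + j + 1 := by omega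
    have e2 : (2 * i + 1) / 2 = i := by omega
    simp only [Finset.coe_sigma, Set.mem_sigma_iff, Finset.coe_filter, Set.mem_ofPred_eq,
      Nat.mem_divisors, Finset.coe_range, Set.mem_Iio, e1, e2]
    refine ⟨⟨⟨⟨x, by linarith⟩, hN.pos.ne'⟩, ?_⟩, by omega⟩
    convert hP using 1; ring
  · rintro ⟨d, i⟩ h
    simp only [Finset.coe_sigma, Set.mem_sigma_iff, Finset.coe_filter, Set.mem_ofPred_eq,
      Nat.mem_divisors, Finset.coe_range, Set.mem_Iio] at h
    obtain ⟨⟨⟨⟨x, rfl⟩, h0⟩, hP⟩, hi⟩ := h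
    have hd : 0 < d := by omega
    have hx : Odd x := (Nat.odd_mul.mp hN).2
    obtain ⟨c, rfl⟩ := Nat.exists_eq_add_of_lt hi
    simp only [Finset.coe_filter, Set.mem_ofPred_eq, mem_oddQuads, Nat.mul_div_cancel_left _ hd]
    have e1 : 2 * (i + c + 1 - i) - 1 = 2 * c + 1 := by omega
    rw [e1]
    refine ⟨⟨⟨i, rfl⟩, hx, ⟨c, rfl⟩, hx, by ring⟩, trivial, ?_⟩
    convert hP using 1; ring
  · rintro ⟨a, x, b, y⟩ h
    simp only [Finset.coe_filter, Set.mem_ofPred_eq, mem_oddQuads] at h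
    obtain ⟨⟨⟨i, rfl⟩, hx, ⟨j, rfl⟩, hy, h⟩, rfl, hP⟩ := h
    have e1 : (2 * i + 1 + (2 * j + 1)) / 2 = i + j + 1 := by omega
    have e2 : (2 * i + 1) / 2 = i := by omega
    have e3 : N = (i + j + 1) * x := by linarith
    simp only [e1, e2, e3]
    rw [Nat.mul_div_cancel_left _ (by omega)]
    simp; omega
  · rintro ⟨d, i⟩ h
    simp only [Finset.coe_sigma, Set.mem_sigma_iff, Finset.coe_range, Set.mem_Iio] at h
    simp only [Sigma.mk.injEq, heq_eq_eq]
    omega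

/-- The contributions of `a ≡ b` off the diagonal `a = b` and of `3 ∣ a + b` off the diagonal
`x = y` are both counted by `mixedQuads` and cancel; only the two diagonals remain. -/
lemma sum_oddQuads {N : ℕ} (hN : Odd N) :
    ∑ p ∈ oddQuads (2 * N), chi3 p.1 * chi3 p.2.2.1 =
      ∑ d ∈ N.divisors.filter (fun d => ¬ 3 ∣ d), (d : ℤ) := by
  set T := oddQuads (2 * N) with hT
  have key : (T.filter fun p => p.2.2.1 < p.1 ∧ 3 ∣ p.1 - p.2.2.1).card =
      (T.filter fun p => p.2.2.2 < p.2.1 ∧ 3 ∣ p.1 + p.2.2.1).card := by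
    rw [card_odd_a_gt, card_odd_x_gt, card_mixed_gt_lt]
  have s1 := card_odd_swap (2 * N) (fun a _ b _ => b < a ∧ 3 ∣ a - b)
  have s2 := card_odd_swap (2 * N) (fun a x b y => y < x ∧ 3 ∣ a + b)
  have d1 := card_odd_transpose (2 * N) (fun a _ b _ => a = b)
  have d2 := card_odd_diag hN (fun _ => True)
  have d3 := card_odd_diag hN (fun s => 3 ∣ s)
  rw [← hT] at s1 s2 d1 d2 d3
  simp only [and_true, Finset.filter_true] at d2
  have c1 : (T.filter fun p => p.1 % 3 = p.2.2.1 % 3).card =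
      (T.filter fun p => p.1 = p.2.2.1).card +
      (T.filter fun p => p.2.2.1 < p.1 ∧ 3 ∣ p.1 - p.2.2.1).card +
      (T.filter fun p => p.1 < p.2.2.1 ∧ 3 ∣ p.2.2.1 - p.1).card := by
    simp only [Finset.card_filter, ← Finset.sum_add_distrib]
    refine Finset.sum_congr rfl fun p _ => ?_
    split_ifs <;> omega
  have c2 : (T.filter fun p => 3 ∣ p.1 + p.2.2.1).card =
      (T.filter fun p => p.2.1 = p.2.2.2 ∧ 3 ∣ p.1 + p.2.2.1).card +
      (T.filter fun p => p.2.2.2 < p.2.1 ∧ 3 ∣ p.1 + p.2.2.1).card +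
      (T.filter fun p => p.2.1 < p.2.2.2 ∧ 3 ∣ p.2.2.1 + p.1).card := by
    simp only [Finset.card_filter, ← Finset.sum_add_distrib]
    refine Finset.sum_congr rfl fun p _ => ?_
    split_ifs <;> omega
  have c3 : ∑ p ∈ T, chi3 p.1 * chi3 p.2.2.1 =
      ((T.filter fun p => p.1 % 3 = p.2.2.1 % 3).card : ℤ) -
      (T.filter fun p => 3 ∣ p.1 + p.2.2.1).card := by
    simp only [Finset.card_filter, chi3_mul_chi3, Finset.sum_sub_distrib]
    push_cast
    rfl
  have d4 : ∑ d ∈ N.divisors.filter (fun d => 3 ∣ 2 * d), d =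
      ∑ d ∈ N.divisors.filter (fun d => 3 ∣ d), d := by
    congr 1
    apply Finset.filter_congr
    intro d _
    omega
  have d5 := Finset.sum_filter_add_sum_filter_not N.divisors (fun d => 3 ∣ d) (fun d => d)
  rw [c3, c1, c2, ← s1, ← s2, d1, d2, d3, d4, ← d5, key]
  push_cast
  ring

/-- The convolution over odd splittings of `2N`, expanded over factorizations of both parts into a
sum over `oddQuads`. -/
lemma sum_esum_mul_esum {N : ℕ} (hN : Odd N) :
    ∑ p ∈ Finset.HasAntidiagonal.antidiagonal (2 * N), (if Odd p.1 then esum p.1 * esum p.2 else 0) =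
      ∑ d ∈ N.divisors.filter (fun d => ¬ 3 ∣ d), (d : ℤ) := by
  rw [← sum_oddQuads hN, ← Finset.sum_filter]
  have e : ∀ n, esum n = ∑ q ∈ n.divisorsAntidiagonal, chi3 q.1 := fun n =>
    (Nat.sum_divisorsAntidiagonal (f := fun a _ => chi3 a)).symm
  simp only [e, Finset.sum_mul_sum, ← Finset.sum_product', Finset.sum_sigma']
  refine Finset.sum_nbij' (fun q => (q.2.1.1, q.2.1.2, q.2.2.1, q.2.2.2))
    (fun p => ⟨(p.1 * p.2.1, p.2.2.1 * p.2.2.2), ((p.1, p.2.1), (p.2.2.1, p.2.2.2))⟩) ?_ ?_ ?_ ?_ ?_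
  · rintro ⟨⟨A, B⟩, ⟨⟨a, x⟩, ⟨b, y⟩⟩⟩ h
    simp only [Finset.mem_sigma, Finset.mem_filter, Finset.HasAntidiagonal.mem_antidiagonal, Finset.mem_product,
      Nat.mem_divisorsAntidiagonal] at h
    obtain ⟨⟨h, hA⟩, ⟨rfl, _⟩, rfl, _⟩ := h
    have hB : Odd (b * y) := by grind
    rw [Nat.odd_mul] at hA hB
    exact mem_oddQuads.mpr ⟨hA.1, hA.2, hB.1, hB.2, h⟩
  · rintro ⟨a, x, b, y⟩ h
    rw [mem_oddQuads] at h
    obtain ⟨ha, hx, hb, hy, h⟩ := h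
    simp only [Finset.mem_sigma, Finset.mem_filter, Finset.HasAntidiagonal.mem_antidiagonal, Finset.mem_product,
      Nat.mem_divisorsAntidiagonal]
    exact ⟨⟨h, ha.mul hx⟩, ⟨trivial, (ha.mul hx).pos.ne'⟩, trivial, (hb.mul hy).pos.ne'⟩
  · rintro ⟨⟨A, B⟩, ⟨⟨a, x⟩, ⟨b, y⟩⟩⟩ h
    simp only [Finset.mem_sigma, Finset.mem_product, Nat.mem_divisorsAntidiagonal] at h
    obtain ⟨_, ⟨rfl, _⟩, rfl, _⟩ := h
    rfl
  · rintro ⟨a, x, b, y⟩ _; rfl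
  · rintro ⟨⟨A, B⟩, ⟨⟨a, x⟩, ⟨b, y⟩⟩⟩ _; rfl

lemma divisors_not_three {n₁ β N : ℕ} (h3 : ¬ 3 ∣ n₁) (hn₁ : 0 < n₁) (hN : N = 3 ^ β * n₁) :
    N.divisors.filter (fun d => ¬ 3 ∣ d) = n₁.divisors := by
  ext d
  simp only [Finset.mem_filter, Nat.mem_divisors]
  constructor
  · rintro ⟨⟨hd, _⟩, h⟩
    refine ⟨?_, hn₁.ne'⟩
    rw [hN] at hd
    exact (Nat.Coprime.pow_right β
      ((Nat.prime_three.coprime_iff_not_dvd.mpr h).symm)).dvd_of_dvd_mul_left hd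
  · rintro ⟨hd, _⟩
    refine ⟨⟨hN ▸ hd.mul_left _, by rw [hN]; positivity⟩, fun h => h3 (h.trans hd)⟩

/-! ### Representations by `x² + 3y²` -/

/-- The integer solutions of `x² + 3y² = n`. -/
def sol (n : ℤ) : Set (ℤ × ℤ) := {p | p.1 ^ 2 + 3 * p.2 ^ 2 = n}

lemma sol_finite (n : ℤ) : (sol n).Finite := by
  refine Set.Finite.subset (Set.Finite.prod (Set.finite_Icc (-|n|) |n|)
    (Set.finite_Icc (-|n|) |n|)) ?_
  rintro ⟨x, y⟩ h
  simp only [sol, Set.mem_ofPred_eq] at h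
  have h0 : |n| = n := abs_of_nonneg (by nlinarith [sq_nonneg x, sq_nonneg y])
  rw [h0]
  refine ⟨⟨?_, ?_⟩, ?_, ?_⟩ <;> simp only <;>
    nlinarith [sq_nonneg x, sq_nonneg y, Int.le_self_sq x, Int.le_self_sq y,
      Int.le_self_sq (-x), Int.le_self_sq (-y)]

/-- The ramified prime: `3` divides `x`, and `(x, y) ↦ (y, x / 3)` removes a factor `√-3`. -/
lemma sol_three (m : ℤ) : (sol (3 * m)).ncard = (sol m).ncard := by
  symm
  refine Set.ncard_congr (fun p _ => (3 * p.2, p.1)) ?_ ?_ ?_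
  · rintro ⟨x, y⟩ h
    simp only [sol, Set.mem_ofPred_eq] at h ⊢
    linear_combination 3 * h
  · rintro ⟨x, y⟩ ⟨x', y'⟩ _ _ h
    simp only [Prod.mk.injEq] at h ⊢
    omega
  · rintro ⟨x, y⟩ h
    simp only [sol, Set.mem_ofPred_eq] at h
    have h3 : (3 : ℤ) ∣ x := Int.prime_three.dvd_of_dvd_pow (n := 2) ⟨m - y ^ 2, by linarith⟩
    obtain ⟨c, rfl⟩ := h3
    refine ⟨(y, c), ?_, rfl⟩
    simp only [sol, Set.mem_ofPred_eq]
    linarith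

/-- For a prime `p` the solutions of norm `p m` divisible by `p` are `p` times the solutions of norm
`m / p`, if `p` divides `m`; otherwise there are none. -/
lemma sol_dvd_both {p : ℕ} (hp : p.Prime) (m : ℕ) :
    {q ∈ sol ((p * m : ℕ) : ℤ) | (p : ℤ) ∣ q.1 ∧ (p : ℤ) ∣ q.2}.ncard =
      if p ∣ m then (sol ((m / p : ℕ) : ℤ)).ncard else 0 := by
  have hp0 : (p : ℤ) ≠ 0 := by exact_mod_cast hp.ne_zero
  split_ifs with h
  · obtain ⟨k, rfl⟩ := h
    rw [Nat.mul_div_cancel_left _ hp.pos]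
    symm
    refine Set.ncard_congr (fun q _ => (p * q.1, p * q.2)) ?_ ?_ ?_
    · rintro ⟨x, y⟩ h
      simp only [sol, Set.mem_ofPred_eq] at h ⊢
      refine ⟨?_, dvd_mul_right _ _, dvd_mul_right _ _⟩
      push_cast
      linear_combination (p : ℤ) ^ 2 * h
    · rintro ⟨x, y⟩ ⟨x', y'⟩ _ _ h
      simpa [hp.ne_zero] using h
    · rintro ⟨x, y⟩ ⟨h, ⟨a, ha⟩, b, hb⟩
      simp only at ha hb
      subst ha hb
      simp only [sol, Set.mem_ofPred_eq] at h
      refine ⟨(a, b), ?_, rfl⟩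
      simp only [sol, Set.mem_ofPred_eq]
      apply mul_left_cancel₀ (pow_ne_zero 2 hp0)
      push_cast at h
      linear_combination h
  · convert Set.ncard_empty (ℤ × ℤ)
    rw [Set.eq_empty_iff_forall_notMem]
    rintro ⟨x, y⟩ ⟨h', ⟨a, ha⟩, b, hb⟩
    simp only at ha hb
    subst ha hb
    simp only [sol, Set.mem_ofPred_eq] at h'
    apply h
    have : (p : ℤ) ∣ m := ⟨a ^ 2 + 3 * b ^ 2, mul_left_cancel₀ hp0 (by
      push_cast at h'; linear_combination -h')⟩
    exact_mod_cast this

/-- If `-3` is a square modulo `p`, then `p ≡ 1` modulo `3`, because there is a primitive cube root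
of unity modulo `p`. -/
lemma three_dvd_of_sqrt {p : ℕ} [Fact p.Prime] (h2 : p ≠ 2) (h3 : p ≠ 3) {z : ZMod p}
    (hz : z ^ 2 = -3) : 3 ∣ p - 1 := by
  have hp : p.Prime := Fact.out
  have t2 : (2 : ZMod p) ≠ 0 := by
    intro h
    have : p ∣ 2 := (ZMod.natCast_eq_zero_iff 2 p).mp (by exact_mod_cast h)
    exact h2 ((Nat.prime_dvd_prime_iff_eq hp Nat.prime_two).mp this)
  have t3 : (3 : ZMod p) ≠ 0 := by
    intro h
    have : p ∣ 3 := (ZMod.natCast_eq_zero_iff 3 p).mp (by exact_mod_cast h)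
    exact h3 ((Nat.prime_dvd_prime_iff_eq hp Nat.prime_three).mp this)
  -- `w = (z - 1) / 2` is a primitive cube root of unity
  set w : ZMod p := (z - 1) / 2 with hw
  have hzw : z = 2 * w + 1 := by rw [hw]; field_simp; ring
  have hw1 : w ^ 2 + w + 1 = 0 := by
    apply mul_left_cancel₀ (pow_ne_zero 2 t2)
    rw [hzw] at hz
    linear_combination hz
  have ho : orderOf w = 3 := by
    apply orderOf_eq_prime
    · linear_combination (w - 1) * hw1
    · intro h
      rw [h] at hw1
      apply t3
      linear_combination hw1
  rw [← ho]
  apply ZMod.orderOf_dvd_card_sub_one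
  intro h
  rw [h] at hw1
  simp at hw1

/-- If `p ≡ 1` modulo `3` and `g` is a primitive cube root of unity, then `2g + 1` is a square root
of `-3`. -/
lemma exists_sqrt {p : ℕ} [Fact p.Prime] (h : p % 3 = 1) : ∃ z : ZMod p, z ^ 2 = -3 := by
  have hp : p.Prime := Fact.out
  have : 3 ∣ Nat.card (ZMod p)ˣ := by
    rw [Nat.card_eq_fintype_card, ZMod.card_units]; omega
  obtain ⟨g, hg⟩ := exists_prime_orderOf_dvd_card' 3 this
  have h1 : (g : ZMod p) ^ 3 = 1 := by
    have := pow_orderOf_eq_one g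
    rw [hg] at this
    simpa using congrArg Units.val this
  have h2 : (g : ZMod p) ≠ 1 := by
    intro h
    have : g = 1 := Units.ext h
    rw [this, orderOf_one] at hg
    omega
  have h3 : (g : ZMod p) ^ 2 + g + 1 = 0 := by
    apply mul_left_cancel₀ (sub_ne_zero.mpr h2)
    linear_combination h1
  exact ⟨2 * g + 1, by linear_combination 4 * h3⟩

/-- Inert primes: as `-3` is not a square modulo `p`, both coordinates are divisible by `p`. -/
lemma sol_inert {p : ℕ} (hp : p.Prime) (h2 : p ≠ 2) (h : p % 3 = 2) (m : ℕ) :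
    (sol ((p * m : ℕ) : ℤ)).ncard = if p ∣ m then (sol ((m / p : ℕ) : ℤ)).ncard else 0 := by
  rw [← sol_dvd_both hp]
  congr 1
  ext ⟨x, y⟩
  simp only [Set.mem_ofPred_eq, iff_self_and]
  intro hs
  simp only [sol, Set.mem_ofPred_eq] at hs
  have : Fact p.Prime := ⟨hp⟩
  have hz : (x : ZMod p) ^ 2 + 3 * (y : ZMod p) ^ 2 = 0 := by
    have := congrArg (Int.cast : ℤ → ZMod p) hs
    push_cast at this
    rw [this]; simp
  have hy : (y : ZMod p) = 0 := by
    by_contra hy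
    have : 3 ∣ p - 1 := three_dvd_of_sqrt h2 (by omega) (z := (x : ZMod p) / y) (by
      field_simp
      linear_combination hz)
    omega
  have hx : (x : ZMod p) = 0 := by
    rw [hy] at hz
    simpa using hz
  exact ⟨(ZMod.intCast_zmod_eq_zero_iff_dvd x p).mp hx,
    (ZMod.intCast_zmod_eq_zero_iff_dvd y p).mp hy⟩

/-- Thue's pigeonhole argument: a square root of `-3` modulo `p` yields a small multiple of `p`
of the form `x² + 3y²`, and the multiples `2p` and `3p` are excluded or reduced. -/
lemma exists_rep {p : ℕ} (hp : p.Prime) (h : p % 3 = 1) :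
    ∃ u v : ℤ, u ^ 2 + 3 * v ^ 2 = p := by
  have : Fact p.Prime := ⟨hp⟩
  obtain ⟨z, hz⟩ := exists_sqrt h
  set s := Nat.sqrt p with hs
  have hs1 : s * s < p := by
    refine lt_of_le_of_ne (Nat.sqrt_le p) fun h => ?_
    exact hp.not_isSquare ⟨s, h.symm⟩
  have hs2 : p < (s + 1) * (s + 1) := Nat.lt_succ_sqrt p
  let D := Finset.range (s + 1) ×ˢ Finset.range (s + 1)
  have hcard : (Finset.univ : Finset (ZMod p)).card < D.card := by
    simp only [D, Finset.card_univ, ZMod.card, Finset.card_product, Finset.card_range]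
    exact hs2
  obtain ⟨⟨a, b⟩, ha, ⟨c, d⟩, hc, hne, he⟩ :=
    Finset.exists_ne_map_eq_of_card_lt_of_maps_to hcard
      (f := fun q : ℕ × ℕ => (q.1 : ZMod p) - z * q.2) (fun _ _ => Finset.mem_univ _)
  simp only [D, Finset.mem_product, Finset.mem_range] at ha hc he
  obtain ⟨x, hx⟩ : ∃ x : ℤ, x = a - c := ⟨_, rfl⟩
  obtain ⟨y, hy⟩ : ∃ y : ℤ, y = b - d := ⟨_, rfl⟩
  have hdvd : (p : ℤ) ∣ x ^ 2 + 3 * y ^ 2 := by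
    rw [← ZMod.intCast_zmod_eq_zero_iff_dvd]
    have : (x : ZMod p) = z * y := by
      rw [hx, hy]; push_cast; linear_combination he
    push_cast
    rw [this]
    linear_combination (y : ZMod p) ^ 2 * hz
  obtain ⟨k, hk⟩ := hdvd
  have hx2 : x ^ 2 ≤ s * s := by
    have : |x| ≤ s := by rw [abs_le]; omega
    nlinarith [abs_nonneg x, sq_abs x]
  have hy2 : y ^ 2 ≤ s * s := by
    have : |y| ≤ s := by rw [abs_le]; omega
    nlinarith [abs_nonneg y, sq_abs y]
  have hpos : 0 < x ^ 2 + 3 * y ^ 2 := by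
    have : x ≠ 0 ∨ y ≠ 0 := by
      by_contra hcon
      push Not at hcon
      apply hne
      ext <;> simp only <;> omega
    rcases this with h | h <;> positivity
  have hs1' : (s : ℤ) * s < p := by exact_mod_cast hs1
  have hp0 : (0 : ℤ) < p := by exact_mod_cast hp.pos
  have hk0 : 0 < k := by
    rw [hk] at hpos
    exact pos_of_mul_pos_right hpos hp0.le
  have hk4 : k < 4 := by nlinarith
  have hodd : (p : ℤ) % 2 = 1 := by
    have := hp.eq_two_or_odd
    omega
  interval_cases k
  · exact ⟨x, y, by linarith⟩
  · exfalso
    obtain ⟨e, he | he⟩ := Int.even_or_odd' (x - y)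
    · obtain rfl : x = y + 2 * e := by linarith
      have : 4 * (y ^ 2 + y * e + e ^ 2) = p * 2 := by linarith
      omega
    · obtain rfl : x = y + 2 * e + 1 := by linarith
      have : 2 * (2 * y ^ 2 + 2 * e ^ 2 + 2 * y * e + y + 2 * e) + 1 = p * 2 := by linarith
      omega
  · have h3 : (3 : ℤ) ∣ x := Int.prime_three.dvd_of_dvd_pow (n := 2) ⟨p - y ^ 2, by linarith⟩
    obtain ⟨c, rfl⟩ := h3
    exact ⟨y, c, by linarith⟩

/-- Split primes: with `p = u² + 3v²`, a solution of norm `p m` is a multiple of `u + v√-3` or of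
`u - v√-3`, and it is a multiple of both exactly when it is a multiple of `p`. -/
lemma sol_split {p : ℕ} (hp : p.Prime) (h : p % 3 = 1) (m : ℕ) :
    ((sol ((p * m : ℕ) : ℤ)).ncard : ℤ) =
      2 * (sol m).ncard - if p ∣ m then ((sol ((m / p : ℕ) : ℤ)).ncard : ℤ) else 0 := by
  obtain ⟨u, v, huv⟩ := exists_rep hp h
  have hp0 : (p : ℤ) ≠ 0 := by exact_mod_cast hp.ne_zero
  have hpp : Prime (p : ℤ) := Nat.prime_iff_prime_int.mp hp
  have h2 : ¬ (p : ℤ) ∣ 2 := by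
    intro h'
    have : p ∣ 2 := by exact_mod_cast h'
    have := (Nat.prime_dvd_prime_iff_eq hp Nat.prime_two).mp this
    omega
  have hp3 : ¬ (p : ℤ) ∣ 3 := by
    intro h'
    have : p ∣ 3 := by exact_mod_cast h'
    have := (Nat.prime_dvd_prime_iff_eq hp Nat.prime_three).mp this
    omega
  have hu : ¬ (p : ℤ) ∣ u := by
    rintro ⟨c, rfl⟩
    have hv : (p : ℤ) ∣ v := by
      have : (p : ℤ) ∣ 3 * v ^ 2 := ⟨1 - p * c ^ 2, by linear_combination huv⟩
      rcases hpp.dvd_or_dvd this with h | h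
      · exact absurd h hp3
      · exact hpp.dvd_of_dvd_pow h
    obtain ⟨d, rfl⟩ := hv
    have : (p : ℤ) * (c ^ 2 + 3 * d ^ 2) = 1 := mul_left_cancel₀ hp0 (by linear_combination huv)
    exact hpp.not_isUnit (IsUnit.of_mul_eq_one _ this)
  set S := sol ((p * m : ℕ) : ℤ) with hS
  have mem : ∀ x y : ℤ, (x, y) ∈ S ↔ x ^ 2 + 3 * y ^ 2 = p * m := by
    intro x y; simp [hS, sol]
  -- `S₁` and `S₂` are the multiples of `u + v√-3` and of `u - v√-3`
  set S₁ : Set (ℤ × ℤ) := {q ∈ S | (p : ℤ) ∣ q.2 * u - q.1 * v} with hS₁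
  set S₂ : Set (ℤ × ℤ) := {q ∈ S | (p : ℤ) ∣ q.2 * u + q.1 * v} with hS₂
  have hfin : S.Finite := sol_finite _
  have hunion : S₁ ∪ S₂ = S := by
    ext ⟨x, y⟩
    constructor
    · rintro (h | h) <;> exact h.1
    · intro hxy
      have e := (mem x y).mp hxy
      have : (p : ℤ) ∣ (y * u - x * v) * (y * u + x * v) :=
        ⟨y ^ 2 - v ^ 2 * m, by linear_combination y ^ 2 * huv - v ^ 2 * e⟩
      rcases hpp.dvd_or_dvd this with h | h
      · exact Or.inl ⟨hxy, h⟩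
      · exact Or.inr ⟨hxy, h⟩
  have hinter : S₁ ∩ S₂ = {q ∈ S | (p : ℤ) ∣ q.1 ∧ (p : ℤ) ∣ q.2} := by
    ext ⟨x, y⟩
    constructor
    · rintro ⟨⟨hxy, h⟩, _, h'⟩
      simp only at h h'
      have hy : (p : ℤ) ∣ y := by
        have h1 : (p : ℤ) ∣ 2 * (y * u) := by
          have := dvd_add h h'
          ring_nf at this ⊢
          exact this
        rcases hpp.dvd_or_dvd h1 with h1 | h1
        · exact absurd h1 h2
        · exact (hpp.dvd_or_dvd h1).resolve_right hu
      refine ⟨hxy, ?_, hy⟩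
      obtain ⟨c, rfl⟩ := hy
      exact hpp.dvd_of_dvd_pow (n := 2)
        ⟨m - 3 * p * c ^ 2, by linear_combination (mem _ _).mp hxy⟩
    · rintro ⟨hxy, hx, hy⟩
      exact ⟨⟨hxy, dvd_sub (hy.mul_right u) (hx.mul_right v)⟩, hxy,
        dvd_add (hy.mul_right u) (hx.mul_right v)⟩
  -- conjugation exchanges the multiples of `u + v√-3` and of `u - v√-3`
  have hS12 : S₂.ncard = S₁.ncard := by
    refine Set.ncard_congr (fun q _ => (-q.1, q.2)) ?_ ?_ ?_
    · rintro ⟨x, y⟩ ⟨hxy, h⟩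
      refine ⟨?_, ?_⟩
      · rw [mem] at hxy ⊢; linear_combination hxy
      · simpa using h
    · rintro ⟨x, y⟩ ⟨x', y'⟩ _ _ h
      simpa using h
    · rintro ⟨x, y⟩ ⟨hxy, h⟩
      refine ⟨(-x, y), ⟨?_, ?_⟩, by simp⟩
      · rw [mem] at hxy ⊢; linear_combination hxy
      · simpa [sub_eq_add_neg] using h
  -- multiplication by `u + v√-3`
  have hS1 : (sol m).ncard = S₁.ncard := by
    refine Set.ncard_congr (fun q _ => (q.1 * u - 3 * q.2 * v, q.1 * v + q.2 * u)) ?_ ?_ ?_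
    · rintro ⟨x, y⟩ h
      simp only [sol, Set.mem_ofPred_eq] at h
      refine ⟨?_, ?_⟩
      · rw [mem]
        linear_combination (u ^ 2 + 3 * v ^ 2) * h + m * huv
      · exact ⟨y, by simp only; linear_combination y * huv⟩
    · rintro ⟨x, y⟩ ⟨x', y'⟩ _ _ h
      simp only [Prod.mk.injEq] at h ⊢
      constructor
      · apply mul_left_cancel₀ hp0
        linear_combination u * h.1 + 3 * v * h.2 + (x' - x) * huv
      · apply mul_left_cancel₀ hp0
        linear_combination u * h.2 - v * h.1 + (y' - y) * huv
    · rintro ⟨x, y⟩ ⟨hxy, ⟨b, hb⟩⟩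
      rw [mem] at hxy
      simp only at hb
      have ha : (p : ℤ) ∣ x * u + 3 * y * v := hpp.dvd_of_dvd_pow (n := 2)
        ⟨p * m - 3 * p * b ^ 2, by
          linear_combination (u ^ 2 + 3 * v ^ 2) * hxy + p * m * huv -
            3 * (y * u - x * v + p * b) * hb⟩
      obtain ⟨a, ha⟩ := ha
      refine ⟨(a, b), ?_, ?_⟩
      · simp only [sol, Set.mem_ofPred_eq]
        apply mul_left_cancel₀ (pow_ne_zero 2 hp0)
        linear_combination (u ^ 2 + 3 * v ^ 2) * hxy + p * m * huv -
            3 * (y * u - x * v + p * b) * hb - (x * u + 3 * y * v + p * a) * ha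
      · simp only [Prod.mk.injEq]
        constructor
        · apply mul_left_cancel₀ hp0
          linear_combination -u * ha + 3 * v * hb + x * huv
        · apply mul_left_cancel₀ hp0
          linear_combination -v * ha - u * hb + y * huv
  have hcount := Set.ncard_union_add_ncard_inter S₁ S₂
    (hfin.subset fun _ h => h.1) (hfin.subset fun _ h => h.1)
  rw [hunion, hinter, hS12, ← hS1, hS, sol_dvd_both hp] at hcount
  rw [← hS] at hcount
  have hcount' := congrArg (Nat.cast : ℕ → ℤ) hcount
  rw [Nat.cast_add, Nat.cast_ite, Nat.cast_zero, Nat.cast_add] at hcount'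
  linear_combination hcount'

lemma chi3_mul (a b : ℕ) : chi3 (a * b) = chi3 a * chi3 b := by
  unfold chi3
  have ha := Nat.mod_lt a (show 0 < 3 by norm_num)
  have hb := Nat.mod_lt b (show 0 < 3 by norm_num)
  simp only [Nat.mul_mod a b]
  generalize a % 3 = u at *
  generalize b % 3 = v at *
  interval_cases u <;> interval_cases v <;> simp

/-- The Hecke relation at `p`: the divisors of `p m` are those of `m` and `p` times those of `m`, the
overlap being `p` times the divisors of `m / p`. -/
lemma esum_prime_mul {p m : ℕ} (hp : p.Prime) (hm : 0 < m) :
    esum (p * m) = (1 + chi3 p) * esum m - chi3 p * if p ∣ m then esum (m / p) else 0 := by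
  have inj : Function.Injective fun d => p * d := fun a b h => Nat.eq_of_mul_eq_mul_left hp.pos h
  have hmul : ∀ k, ∑ d ∈ k.divisors.image (fun d => p * d), chi3 d = chi3 p * esum k := by
    intro k
    rw [Finset.sum_image (fun a _ b _ h => inj h), esum, Finset.mul_sum]
    simp only [chi3_mul]
  have hunion : (p * m).divisors = m.divisors ∪ m.divisors.image (fun d => p * d) := by
    ext d
    simp only [Finset.mem_union, Nat.mem_divisors, Finset.mem_image]
    constructor
    · rintro ⟨hd, _⟩
      by_cases h : p ∣ d
      · obtain ⟨c, rfl⟩ := h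
        exact Or.inr ⟨c, ⟨Nat.dvd_of_mul_dvd_mul_left hp.pos hd, hm.ne'⟩, rfl⟩
      · exact Or.inl ⟨((hp.coprime_iff_not_dvd.mpr h).symm).dvd_of_dvd_mul_left hd, hm.ne'⟩
    · rintro (⟨h, _⟩ | ⟨c, ⟨h, _⟩, rfl⟩)
      · exact ⟨h.mul_left _, (Nat.mul_pos hp.pos hm).ne'⟩
      · exact ⟨Nat.mul_dvd_mul_left _ h, (Nat.mul_pos hp.pos hm).ne'⟩
  have hinter : ∑ d ∈ m.divisors ∩ m.divisors.image (fun d => p * d), chi3 d =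
      chi3 p * if p ∣ m then esum (m / p) else 0 := by
    split_ifs with h
    · rw [← hmul]
      congr 1
      obtain ⟨k, rfl⟩ := h
      rw [Nat.mul_div_cancel_left _ hp.pos]
      ext d
      simp only [Finset.mem_inter, Nat.mem_divisors, Finset.mem_image]
      have hk : k ≠ 0 := by rintro rfl; simp at hm
      constructor
      · rintro ⟨⟨h, _⟩, c, _, rfl⟩
        exact ⟨c, ⟨Nat.dvd_of_mul_dvd_mul_left hp.pos h, hk⟩, rfl⟩
      · rintro ⟨c, ⟨h, _⟩, rfl⟩
        exact ⟨⟨Nat.mul_dvd_mul_left _ h, hm.ne'⟩, c, ⟨h.mul_left _, hm.ne'⟩, rfl⟩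
    · rw [mul_zero]
      apply Finset.sum_eq_zero
      intro d hd
      simp only [Finset.mem_inter, Nat.mem_divisors, Finset.mem_image] at hd
      obtain ⟨⟨hd, _⟩, c, _, rfl⟩ := hd
      exact absurd ((dvd_mul_right p c).trans hd) h
  have := Finset.sum_union_inter (s₁ := m.divisors) (s₂ := m.divisors.image (fun d => p * d))
    (f := chi3)
  rw [← hunion, hinter, hmul] at this
  change esum (p * m) + _ = esum m + _ at this
  linear_combination this

lemma sol_one : (sol 1).ncard = 2 := by
  have : sol 1 = {((1 : ℤ), (0 : ℤ)), (-1, 0)} := by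
    ext ⟨x, y⟩
    simp only [sol, Set.mem_ofPred_eq, Set.mem_insert_iff, Set.mem_singleton_iff, Prod.mk.injEq]
    constructor
    · intro h
      have hy : y = 0 := by
        by_contra hy
        have : 0 < y ^ 2 := by positivity
        nlinarith [sq_nonneg x]
      subst hy
      have : x ^ 2 = 1 := by linarith
      rcases sq_eq_one_iff.mp this with h | h <;> simp [h]
    · rintro (⟨rfl, rfl⟩ | ⟨rfl, rfl⟩) <;> norm_num
  rw [this, Set.ncard_pair (by simp)]

/-- Dirichlet's formula for the number of representations of an odd number by `x² + 3y²`;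
both sides satisfy the same recursion with respect to multiplication by a prime. -/
lemma sol_eq_esum (n : ℕ) (hn : Odd n) : ((sol n).ncard : ℤ) = 2 * esum n := by
  induction n using Nat.strong_induction_on with
  | _ n ih =>
    rcases eq_or_ne n 1 with rfl | h1
    · simp [sol_one, esum, chi3]
    have hp := Nat.minFac_prime h1
    obtain ⟨m, hm⟩ := Nat.minFac_dvd n
    set p := n.minFac
    rw [hm] at hn
    obtain ⟨hpo, hmo⟩ := Nat.odd_mul.mp hn
    have hp2 := hp.two_le
    have hlt : m < n := by rw [hm]; nlinarith [hmo.pos]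
    have ihm := ih m hlt hmo
    have ihd : (if p ∣ m then ((sol ((m / p : ℕ) : ℤ)).ncard : ℤ) else 0) =
        2 * if p ∣ m then esum (m / p) else 0 := by
      split_ifs with h
      · obtain ⟨k, hk⟩ := h
        rw [hk, Nat.mul_div_cancel_left _ hp.pos]
        rw [hk] at hmo
        exact ih k (by have := (Nat.odd_mul.mp hmo).2.pos; nlinarith) (Nat.odd_mul.mp hmo).2
      · simp
    rw [hm, esum_prime_mul hp hmo.pos]
    have : p % 3 = 0 ∨ p % 3 = 1 ∨ p % 3 = 2 := by omega
    rcases this with h | h | h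
    · have : p = 3 := ((Nat.prime_dvd_prime_iff_eq Nat.prime_three hp).mp
        (Nat.dvd_of_mod_eq_zero h)).symm
      rw [this]
      push_cast
      rw [sol_three, ihm]
      simp [chi3]
    · rw [sol_split hp h, ihm, ihd]
      have : chi3 p = 1 := by simp [chi3, h]
      rw [this]
      ring
    · have : chi3 p = -1 := by simp [chi3, h]
      rw [sol_inert hp (by intro h'; rw [h'] at hpo; exact absurd hpo (by decide)) h, this,
        Nat.cast_ite, Nat.cast_zero, ihd]
      ring

/-! ### Reduction of the count to `x² + 3y²` -/

/-- The solutions of `x² - x + 3(y² - y) + 1 = n`; equivalently, those of `X² + 3Y² = 4n` with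
`X = 2x - 1` and `Y = 2y - 1` odd. -/
def tsol (n : ℤ) : Set (ℤ × ℤ) := {p | p.1 ^ 2 - p.1 + 3 * (p.2 ^ 2 - p.2) + 1 = n}

lemma mem_sol {n x y : ℤ} : (x, y) ∈ sol n ↔ x ^ 2 + 3 * y ^ 2 = n := Iff.rfl

lemma mem_tsol {n x y : ℤ} : (x, y) ∈ tsol n ↔ x ^ 2 - x + 3 * (y ^ 2 - y) + 1 = n := Iff.rfl

lemma oddPair_injective :
    Function.Injective fun p : ℤ × ℤ => (2 * p.1 - 1, 2 * p.2 - 1) := by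
  rintro ⟨x, y⟩ ⟨x', y'⟩ h
  simp only [Prod.mk.injEq] at h ⊢
  omega

lemma tsol_finite (n : ℤ) : (tsol n).Finite := by
  refine ((sol_finite (4 * n)).preimage oddPair_injective.injOn).subset ?_
  rintro ⟨x, y⟩ h
  rw [mem_tsol] at h
  rw [Set.mem_preimage, mem_sol]
  linear_combination 4 * h

/-- Counting the pairs with `f a + g b = N` by the values of `f` and `g`. -/
lemma ncard_add_eq {α β : Type*} (f : α → ℤ) (g : β → ℤ) (hf : ∀ a, 0 ≤ f a) (hg : ∀ b, 0 ≤ g b)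
    (fin_f : ∀ n : ℕ, {a | f a = n}.Finite) (fin_g : ∀ n : ℕ, {b | g b = n}.Finite) (N : ℕ) :
    {q : α × β | f q.1 + g q.2 = N}.ncard =
      ∑ ij ∈ Finset.HasAntidiagonal.antidiagonal N,
        {a | f a = (ij.1 : ℤ)}.ncard * {b | g b = (ij.2 : ℤ)}.ncard := by
  have e : {q : α × β | f q.1 + g q.2 = N} =
      ⋃ ij ∈ Finset.HasAntidiagonal.antidiagonal N,
        {a | f a = (ij.1 : ℤ)} ×ˢ {b | g b = (ij.2 : ℤ)} := by
    ext ⟨a, b⟩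
    simp only [Set.mem_ofPred_eq, Set.mem_iUnion, Set.mem_prod, exists_prop,
      Finset.HasAntidiagonal.mem_antidiagonal, Prod.exists]
    constructor
    · intro h
      have ha := hf a
      have hb := hg b
      exact ⟨(f a).toNat, (g b).toNat, by omega, by omega, by omega⟩
    · rintro ⟨i, j, h, h1, h2⟩
      omega
  rw [e]
  simp only [← Set.ncard_prod]
  induction Finset.HasAntidiagonal.antidiagonal N using Finset.induction_on with
  | empty => simp
  | insert ij s h ih =>
    have fin_s : (⋃ ij ∈ s, {a | f a = (ij.1 : ℤ)} ×ˢ {b | g b = (ij.2 : ℤ)}).Finite :=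
      Set.Finite.biUnion s.finite_toSet fun _ _ => (fin_f _).prod (fin_g _)
    rw [Finset.sum_insert h, ← ih, Finset.set_biUnion_insert, Set.ncard_union_eq ?_
      ((fin_f _).prod (fin_g _)) fin_s]
    · rw [Set.disjoint_iff_forall_ne]
      rintro ⟨a, b⟩ h1 ⟨a', b'⟩ h2 h3
      cases h3
      simp only [Set.mem_iUnion, Set.mem_prod, Set.mem_ofPred_eq, exists_prop] at h1 h2
      obtain ⟨ij', hs, h2⟩ := h2
      have : ij = ij' := by ext <;> omega
      exact h (this ▸ hs)

lemma tri_pos (x y : ℤ) : 0 ≤ x ^ 2 - x + 3 * (y ^ 2 - y) + 1 := by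
  have hx := Int.le_self_sq x
  have hy := Int.le_self_sq y
  linarith

/-- `T(n)`, the number of representations counted by `tsol n`. -/
noncomputable def tcard (n : ℕ) : ℕ := (tsol n).ncard

/-- The number of representations of `n` by `x² + 3y²`. -/
noncomputable def rcard (n : ℕ) : ℕ := (sol n).ncard

/-- In `X² + 3Y² = 4D` the unknowns have equal parity: even pairs are counted by `rcard D` and odd
pairs by `tcard D`. -/
lemma rcard_four_mul (D : ℕ) : rcard (4 * D) = rcard D + tcard D := by
  unfold rcard tcard
  have inj : Function.Injective fun p : ℤ × ℤ => (2 * p.1, 2 * p.2) := by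
    rintro ⟨x, y⟩ ⟨x', y'⟩ h
    simp only [Prod.mk.injEq] at h ⊢
    omega
  rw [← Set.ncard_image_of_injective (sol D) inj,
    ← Set.ncard_image_of_injective (tsol D) oddPair_injective, ← Set.ncard_union_eq ?_
      ((sol_finite _).image _) ((tsol_finite _).image _)]
  · congr 1
    ext ⟨X, Y⟩
    simp only [Set.mem_union, Set.mem_image, Prod.exists, Prod.mk.injEq, mem_sol, mem_tsol]
    push_cast
    constructor
    · intro h
      obtain ⟨x, rfl | rfl⟩ := Int.even_or_odd' X <;> obtain ⟨y, rfl | rfl⟩ := Int.even_or_odd' Y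
      · exact Or.inl ⟨x, y, by linarith, rfl, rfl⟩
      · ring_nf at h; omega
      · ring_nf at h; omega
      · exact Or.inr ⟨x + 1, y + 1, by linarith, by ring, by ring⟩
    · rintro (⟨x, y, h, rfl, rfl⟩ | ⟨x, y, h, rfl, rfl⟩)
      · linear_combination 4 * h
      · linear_combination 4 * h
  · rw [Set.disjoint_iff_forall_ne]
    rintro _ ⟨⟨x, y⟩, _, rfl⟩ _ ⟨⟨x', y'⟩, _, rfl⟩ h
    simp only [Prod.mk.injEq] at h
    omega

lemma rcard_of_mod {C : ℕ} (h : C % 4 = 2) : rcard C = 0 := by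
  unfold rcard
  rw [Set.ncard_eq_zero (sol_finite _), Set.eq_empty_iff_forall_notMem]
  rintro ⟨x, y⟩ hxy
  rw [mem_sol] at hxy
  obtain ⟨x, rfl | rfl⟩ := Int.even_or_odd' x <;> obtain ⟨y, rfl | rfl⟩ := Int.even_or_odd' y <;>
  · ring_nf at hxy
    omega

lemma tcard_even {A : ℕ} (h : Even A) : tcard A = 0 := by
  unfold tcard
  rw [Set.ncard_eq_zero (tsol_finite _), Set.eq_empty_iff_forall_notMem]
  rintro ⟨x, y⟩ hxy
  rw [mem_tsol] at hxy
  obtain ⟨c, rfl⟩ := h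
  obtain ⟨x, rfl | rfl⟩ := Int.even_or_odd' x <;> obtain ⟨y, rfl | rfl⟩ := Int.even_or_odd' y <;>
  · push_cast at hxy
    ring_nf at hxy
    omega

/-- Multiplication by `1 ± √-3`, which is twice a unit of the Eisenstein integers: a solution of
`X² + 3Y² = 4A` in odd integers is of the form `(a + b√-3)(1 ± √-3)` for exactly one choice of
the sign, with `a² + 3b² = A`. -/
lemma tcard_odd {A : ℕ} (h : Odd A) : tcard A = 2 * rcard A := by
  -- `(a + b√-3)(1 - √-3) = X + Y√-3` with `X = a + 3b = 2x - 1` and `Y = b - a = 2y - 1`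
  have e1 : {p ∈ tsol A | Odd (p.1 + p.2)}.ncard = rcard A := by
    symm
    refine Set.ncard_congr (fun p _ => ((p.1 + 3 * p.2 + 1) / 2, (p.2 - p.1 + 1) / 2)) ?_ ?_ ?_
    · rintro ⟨a, b⟩ hab
      rw [mem_sol] at hab
      obtain ⟨c, hc⟩ : ∃ c, b - a = 2 * c + 1 := by
        obtain ⟨k, hk⟩ := h
        obtain ⟨a, rfl | rfl⟩ := Int.even_or_odd' a <;>
          obtain ⟨b, rfl | rfl⟩ := Int.even_or_odd' b
        · ring_nf at hab; omega
        · exact ⟨b - a, by ring⟩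
        · exact ⟨b - a - 1, by ring⟩
        · ring_nf at hab; omega
      obtain rfl : b = a + 2 * c + 1 := by linarith
      have h1 : (a + 3 * (a + 2 * c + 1) + 1) / 2 = 2 * a + 3 * c + 2 := by omega
      have h2 : (a + 2 * c + 1 - a + 1) / 2 = c + 1 := by omega
      simp only [h1, h2]
      refine ⟨?_, ⟨a + 2 * c + 1, by ring⟩⟩
      rw [mem_tsol]
      linear_combination hab
    · rintro ⟨a, b⟩ ⟨a', b'⟩ hab hab' he
      have par : ∀ a b : ℤ, (a, b) ∈ sol A → (b - a) % 2 = 1 := by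
        intro a b hab
        rw [mem_sol] at hab
        obtain ⟨k, hk⟩ := h
        obtain ⟨a, rfl | rfl⟩ := Int.even_or_odd' a <;>
          obtain ⟨b, rfl | rfl⟩ := Int.even_or_odd' b
        · ring_nf at hab; omega
        · omega
        · omega
        · ring_nf at hab; omega
      have p1 := par _ _ hab
      have p2 := par _ _ hab'
      simp only [Prod.mk.injEq] at he ⊢
      omega
    · rintro ⟨x, y⟩ ⟨hxy, c, hc⟩
      rw [mem_tsol] at hxy
      simp only at hc
      obtain rfl : x = 2 * c + 1 - y := by linarith
      refine ⟨(c + 1 - 2 * y, c), ?_, ?_⟩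
      · rw [mem_sol]
        linear_combination hxy
      · simp only [Prod.mk.injEq]
        omega
  -- the sign of `Y` is changed by `y ↦ 1 - y`
  have e2 : {p ∈ tsol A | ¬ Odd (p.1 + p.2)}.ncard = {p ∈ tsol A | Odd (p.1 + p.2)}.ncard := by
    refine Set.ncard_congr (fun p _ => (p.1, 1 - p.2)) ?_ ?_ ?_
    · rintro ⟨x, y⟩ ⟨hxy, h⟩
      rw [mem_tsol] at hxy
      refine ⟨by rw [mem_tsol]; linear_combination hxy, ?_⟩
      simp only at h ⊢
      grind
    · rintro ⟨x, y⟩ ⟨x', y'⟩ _ _ h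
      simp only [Prod.mk.injEq] at h ⊢
      omega
    · rintro ⟨x, y⟩ ⟨hxy, h⟩
      rw [mem_tsol] at hxy
      refine ⟨(x, 1 - y), ⟨by rw [mem_tsol]; linear_combination hxy, ?_⟩, by simp⟩
      simp only at h ⊢
      grind
  have e3 : tsol A = {p ∈ tsol A | Odd (p.1 + p.2)} ∪ {p ∈ tsol A | ¬ Odd (p.1 + p.2)} := by
    ext p
    simp only [Set.mem_union, Set.mem_ofPred_eq]
    tauto
  unfold tcard
  rw [e3, Set.ncard_union_eq ?_ ((tsol_finite _).subset fun _ h => h.1)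
    ((tsol_finite _).subset fun _ h => h.1), e2, e1]
  · ring
  · rw [Set.disjoint_iff_forall_ne]
    rintro p h1 q h2 rfl
    exact h2.2 h1.2

lemma tcard_eq_esum {A : ℕ} (h : Odd A) : (tcard A : ℤ) = 4 * esum A := by
  rw [tcard_odd h]
  push_cast
  rw [rcard, sol_eq_esum A h]
  ring

/-- Doubling the defining equation and adding `5 = 1 + 4` turns the pairs `(x, y)` and `(z, w)` into
elements of `tsol i` and `tsol D` with `i + 4D = 2n + 5`. -/
lemma tquad_eq (n : ℕ) :
    tquad 1 3 4 12 n = ∑ ij ∈ Finset.HasAntidiagonal.antidiagonal (2 * n + 5),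
      tcard ij.1 * if 4 ∣ ij.2 then tcard (ij.2 / 4) else 0 := by
  have key := ncard_add_eq (fun p : ℤ × ℤ => p.1 ^ 2 - p.1 + 3 * (p.2 ^ 2 - p.2) + 1)
    (fun p : ℤ × ℤ => 4 * (p.1 ^ 2 - p.1 + 3 * (p.2 ^ 2 - p.2) + 1))
    (fun p => tri_pos _ _) (fun p => by have := tri_pos p.1 p.2; positivity)
    (fun n => tsol_finite n) (fun n => (tsol_finite (n / 4)).subset (by
      rintro ⟨x, y⟩ h
      simp only [Set.mem_ofPred_eq] at h
      rw [mem_tsol]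
      omega)) (2 * n + 5)
  have fib : ∀ j : ℕ, {p : ℤ × ℤ | 4 * (p.1 ^ 2 - p.1 + 3 * (p.2 ^ 2 - p.2) + 1) = (j : ℤ)}.ncard =
      if 4 ∣ j then tcard (j / 4) else 0 := by
    intro j
    split_ifs with h
    · obtain ⟨k, rfl⟩ := h
      rw [Nat.mul_div_cancel_left _ (by norm_num)]
      unfold tcard
      congr 1
      ext ⟨x, y⟩
      rw [mem_tsol]
      simp only [Set.mem_ofPred_eq]
      push_cast
      omega
    · convert Set.ncard_empty (ℤ × ℤ)
      rw [Set.eq_empty_iff_forall_notMem]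
      rintro ⟨x, y⟩ h'
      simp only [Set.mem_ofPred_eq] at h'
      omega
  simp only [fib] at key
  rw [show (∑ ij ∈ Finset.HasAntidiagonal.antidiagonal (2 * n + 5),
      tcard ij.1 * if 4 ∣ ij.2 then tcard (ij.2 / 4) else 0) = _ from key.symm, tquad,
      ← Nat.card_coe_set_eq]
  refine Nat.card_congr ((Equiv.prodAssoc ℤ ℤ (ℤ × ℤ)).symm.subtypeEquiv ?_)
  rintro ⟨x, y, z, w⟩
  have h (u : ℤ) : 2 * (u * (u - 1) / 2) = u ^ 2 - u := by
    rw [Int.mul_ediv_cancel' (Int.even_mul_pred_self u).two_dvd]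
    ring
  simp only [Equiv.prodAssoc_symm_apply, Set.mem_ofPred_eq, ← h]
  push_cast
  omega

/-- The change of variables `(x, z) = (i + j, i - j)` or `(i + j, j - i + 1)`, according to the
parity of `x + z`, and the same for `(y, w)`, turns
`x² - x + z² - z` into `2 (i² - i + j²)`. -/
lemma sum_tcard_mul_tcard (N : ℕ) :
    ∑ ij ∈ Finset.HasAntidiagonal.antidiagonal (2 * N), tcard ij.1 * tcard ij.2 =
      4 * ∑ ij ∈ Finset.HasAntidiagonal.antidiagonal N, tcard ij.1 * rcard ij.2 := by
  have k1 := ncard_add_eq (fun p : ℤ × ℤ => p.1 ^ 2 - p.1 + 3 * (p.2 ^ 2 - p.2) + 1)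
    (fun p : ℤ × ℤ => p.1 ^ 2 - p.1 + 3 * (p.2 ^ 2 - p.2) + 1)
    (fun p => tri_pos _ _) (fun p => tri_pos _ _)
    (fun n => tsol_finite n) (fun n => tsol_finite n) (2 * N)
  have k2 := ncard_add_eq (fun p : ℤ × ℤ => p.1 ^ 2 - p.1 + 3 * (p.2 ^ 2 - p.2) + 1)
    (fun p : ℤ × ℤ => p.1 ^ 2 + 3 * p.2 ^ 2)
    (fun p => tri_pos _ _) (fun p => by positivity)
    (fun n => tsol_finite n) (fun n => sol_finite n) N
  set S := {q : (ℤ × ℤ) × (ℤ × ℤ) | q.1.1 ^ 2 - q.1.1 + 3 * (q.1.2 ^ 2 - q.1.2) + 1 +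
    (q.2.1 ^ 2 + 3 * q.2.2 ^ 2) = N} with hS
  let E : (Bool × Bool) × ((ℤ × ℤ) × (ℤ × ℤ)) → (ℤ × ℤ) × (ℤ × ℤ) := fun t =>
    ((t.2.1.1 + t.2.2.1, t.2.1.2 + t.2.2.2),
      (cond t.1.1 (t.2.1.1 - t.2.2.1) (t.2.2.1 - t.2.1.1 + 1),
        cond t.1.2 (t.2.1.2 - t.2.2.2) (t.2.2.2 - t.2.1.2 + 1)))
  have hE : Function.Injective E := by
    rintro ⟨⟨b, c⟩, ⟨i, i'⟩, ⟨j, j'⟩⟩ ⟨⟨b₂, c₂⟩, ⟨i₂, i₂'⟩, ⟨j₂, j₂'⟩⟩ h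
    simp only [E, Prod.mk.injEq] at h ⊢
    cases b <;> cases b₂ <;> cases c <;> cases c₂ <;> simp at h ⊢ <;> omega
  have him : {q : (ℤ × ℤ) × (ℤ × ℤ) | q.1.1 ^ 2 - q.1.1 + 3 * (q.1.2 ^ 2 - q.1.2) + 1 +
      (q.2.1 ^ 2 - q.2.1 + 3 * (q.2.2 ^ 2 - q.2.2) + 1) = ((2 * N : ℕ) : ℤ)} =
      E '' (Set.univ ×ˢ S) := by
    ext ⟨⟨x, y⟩, ⟨z, w⟩⟩
    simp only [Set.mem_ofPred_eq, Set.mem_image, Set.mem_prod, Set.mem_univ, true_and]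
    have par (x z : ℤ) : ∃ (b : Bool) (i j : ℤ), x = i + j ∧
        z = cond b (i - j) (j - i + 1) := by
      obtain ⟨c, hc | hc⟩ := Int.even_or_odd' (x + z)
      · exact ⟨true, c, x - c, by ring, by simp only [cond_true]; linarith⟩
      · exact ⟨false, x - c, c, by ring, by simp only [cond_false]; linarith⟩
    have val (b : Bool) (i j : ℤ) : (i + j) ^ 2 - (i + j) +
        ((cond b (i - j) (j - i + 1)) ^ 2 - cond b (i - j) (j - i + 1)) =
        2 * (i ^ 2 - i + j ^ 2) := by
      cases b <;> simp only [cond_true, cond_false] <;> ring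
    push_cast
    constructor
    · obtain ⟨b, i, j, rfl, rfl⟩ := par x z
      obtain ⟨c, i', j', rfl, rfl⟩ := par y w
      intro h
      refine ⟨((b, c), (i, i'), (j, j')), ?_, rfl⟩
      have v1 := val b i j
      have v2 := val c i' j'
      simp only [hS, Set.mem_ofPred_eq]
      linarith
    · rintro ⟨⟨⟨b, c⟩, ⟨i, i'⟩, ⟨j, j'⟩⟩, h, he⟩
      simp only [E, Prod.mk.injEq] at he
      obtain ⟨⟨rfl, rfl⟩, rfl, rfl⟩ := he
      have v1 := val b i j
      have v2 := val c i' j'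
      simp only [hS, Set.mem_ofPred_eq] at h
      linarith
  have hc : (Set.univ : Set (Bool × Bool)).ncard = 4 := by
    rw [Set.ncard_univ, Nat.card_eq_fintype_card]; rfl
  rw [him, Set.ncard_image_of_injective _ hE, Set.ncard_prod, hc] at k1
  refine k1.symm.trans ?_
  rw [k2]
  rfl

/-- The Eisenstein part: the sum over all representations is a divisor sum. -/
lemma sum_tcard_mul_rcard {N : ℕ} (hN : Odd N) :
    ∑ ij ∈ Finset.HasAntidiagonal.antidiagonal N, (tcard ij.1 * rcard ij.2 : ℤ) =
      4 * ∑ d ∈ N.divisors.filter (fun d => ¬ 3 ∣ d), (d : ℤ) := by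
  have h := sum_tcard_mul_tcard N
  rw [← sum_esum_mul_esum hN]
  have h2 : ∑ ij ∈ Finset.HasAntidiagonal.antidiagonal (2 * N), (tcard ij.1 * tcard ij.2 : ℤ) =
      16 * ∑ p ∈ Finset.HasAntidiagonal.antidiagonal (2 * N),
        (if Odd p.1 then esum p.1 * esum p.2 else 0) := by
    rw [Finset.mul_sum]
    refine Finset.sum_congr rfl fun p hp => ?_
    rw [Finset.HasAntidiagonal.mem_antidiagonal] at hp
    split_ifs with ho
    · have h2 : Odd p.2 := by grind
      rw [tcard_eq_esum ho, tcard_eq_esum h2]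
      ring
    · rw [tcard_even (Nat.not_odd_iff_even.1 ho)]
      simp
  zify at h
  linarith

/-- Termwise this is `2 T(D) = r(4D) - (-1)^D r(D)`. For odd `i` the term `T(i) r(j)` with `4 ∤ j`
vanishes since `j ≡ 2` modulo `4`. -/
lemma two_mul_tquad (n : ℕ) :
    2 * (tquad 1 3 4 12 n : ℤ) =
      ∑ ij ∈ Finset.HasAntidiagonal.antidiagonal (2 * n + 5), (tcard ij.1 * rcard ij.2 : ℤ) -
      ∑ ij ∈ Finset.HasAntidiagonal.antidiagonal (2 * n + 5),
        (tcard ij.1 * if 4 ∣ ij.2 then (-1 : ℤ) ^ (ij.2 / 4) * rcard (ij.2 / 4) else 0 : ℤ) := by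
  rw [tquad_eq, ← Finset.sum_sub_distrib]
  push_cast
  rw [Finset.mul_sum]
  refine Finset.sum_congr rfl fun p hp => ?_
  rw [Finset.HasAntidiagonal.mem_antidiagonal] at hp
  rcases Nat.even_or_odd p.1 with ho | ho
  · simp [tcard_even ho]
  split_ifs with h4
  · obtain ⟨D, hD⟩ := h4
    rw [hD, Nat.mul_div_cancel_left _ (by norm_num), rcard_four_mul]
    rcases Nat.even_or_odd D with hD | hD
    · simp [tcard_even hD, hD.neg_one_pow]
    · simp only [hD.neg_one_pow, tcard_odd hD]
      push_cast
      ring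
  · have : p.2 % 4 = 2 := by
      obtain ⟨k, hk⟩ := ho
      omega
    simp [rcard_of_mod this]

/-! ### Jacobi's triple product identity -/

/-- The finite product `(1 - q)(1 - q²)⋯(1 - qⁿ)`. -/
noncomputable def poch (q : ℂ) (n : ℕ) : ℂ := ∏ i ∈ Finset.range n, (1 - q ^ (i + 1))

/-- Euler's product `∏ (1 - qᵏ)` over `k ≥ 1`. -/
noncomputable def euler (q : ℂ) : ℂ := ∏' i : ℕ, (1 - q ^ (i + 1))

lemma one_sub_pow_ne_zero {q : ℂ} (hq : ‖q‖ < 1) (i : ℕ) : 1 - q ^ (i + 1) ≠ 0 := by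
  intro h
  have : ‖q ^ (i + 1)‖ = 1 := by rw [← sub_eq_zero.1 h, norm_one]
  rw [norm_pow] at this
  exact (pow_lt_one₀ (norm_nonneg q) hq (by omega)).ne this

lemma poch_ne_zero {q : ℂ} (hq : ‖q‖ < 1) (n : ℕ) : poch q n ≠ 0 :=
  Finset.prod_ne_zero_iff.2 fun i _ => one_sub_pow_ne_zero hq i

lemma euler_ne_zero {q : ℂ} (hq : ‖q‖ < 1) : euler q ≠ 0 := by
  have := tprod_one_add_ne_zero_of_summable (f := fun i : ℕ => -q ^ (i + 1))
    (fun i => by simpa [sub_eq_add_neg] using one_sub_pow_ne_zero hq i)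
    (by simpa using (summable_nat_add_iff 1).mpr (summable_geometric_of_lt_one (norm_nonneg _) hq))
  simpa [euler, sub_eq_add_neg] using this

lemma tendsto_poch {q : ℂ} (hq : ‖q‖ < 1) :
    Filter.Tendsto (poch q) Filter.atTop (nhds (euler q)) :=
  (ModularForm.multipliable_one_sub_pow hq).hasProd.tendsto_prod_nat

/-- `1 / ((1 - q)⋯(1 - qᵐ))`, extended by zero to negative `m`. -/
noncomputable def invPoch (q : ℂ) (m : ℤ) : ℂ := if 0 ≤ m then (poch q m.toNat)⁻¹ else 0

lemma invPoch_sub_one {q : ℂ} (hq : ‖q‖ < 1) (m : ℤ) :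
    invPoch q (m - 1) = (1 - q ^ m) * invPoch q m := by
  unfold invPoch
  rcases lt_trichotomy m 0 with h | rfl | h
  · rw [if_neg (by omega), if_neg (by omega), mul_zero]
  · simp
  · obtain ⟨k, rfl⟩ : ∃ k : ℕ, m = (k : ℤ) + 1 := ⟨(m - 1).toNat, by omega⟩
    rw [if_pos (by omega), if_pos (by omega), add_sub_cancel_right, Int.toNat_natCast,
      show ((k : ℤ) + 1).toNat = k + 1 by omega, poch, poch, Finset.prod_range_succ]
    have h1 := one_sub_pow_ne_zero hq k
    have h2 := poch_ne_zero hq k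
    rw [poch] at h2
    rw [show q ^ ((k : ℤ) + 1) = q ^ (k + 1) by exact_mod_cast zpow_natCast q (k + 1)]
    field_simp

/-- The term `z^k q^(k(k-1)/2)` of the theta series in Jacobi's identity. The division is one of
integers, and exact. -/
noncomputable def thetaTerm (z q : ℂ) (k : ℤ) : ℂ := z ^ k * q ^ (k * (k - 1) / 2)

lemma thetaTerm_succ {z q : ℂ} (hz : z ≠ 0) (hq : q ≠ 0) (k : ℤ) :
    thetaTerm z q (k + 1) = thetaTerm z q k * (z * q ^ k) := by
  unfold thetaTerm
  have : (k + 1) * (k + 1 - 1) / 2 = k * (k - 1) / 2 + k := by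
    rw [← Int.add_mul_ediv_right _ _ (by norm_num)]
    ring_nf
  rw [this, zpow_add₀ hq, zpow_add_one₀ hz]
  ring

/-- The finite form of Jacobi's triple product identity. -/
lemma hasSum_finite_jtp {z q : ℂ} (hz : z ≠ 0) (hq0 : q ≠ 0) (hq : ‖q‖ < 1) (n : ℕ) :
    HasSum (fun k : ℤ => poch q (2 * n) * invPoch q (n - k) * invPoch q (n + k) * thetaTerm z q k)
      (∏ i ∈ Finset.range n, (1 + z * q ^ i) * (1 + z⁻¹ * q ^ (i + 1))) := by
  induction n with
  | zero =>
    -- both reciprocals are nonzero only for `k = 0`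
    convert hasSum_single (0 : ℤ) ?_ using 1
    · simp [poch, invPoch, thetaTerm]
    · intro k hk
      rcases lt_or_gt_of_ne hk with h | h
      · simp [invPoch, h]
      · simp [invPoch, h]
  | succ n ih =>
    rw [Finset.prod_range_succ]
    set P := ∏ i ∈ Finset.range n, (1 + z * q ^ i) * (1 + z⁻¹ * q ^ (i + 1))
    have s1 := ((Equiv.addRight (-1 : ℤ)).hasSum_iff.2 ih).mul_left (z * q ^ n)
    have s2 := ((Equiv.addRight (1 : ℤ)).hasSum_iff.2 ih).mul_left (z⁻¹ * q ^ (n + 1))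
    have s := ((ih.mul_left (1 + q ^ (2 * n + 1))).add s1).add s2
    have hP : P * ((1 + z * q ^ n) * (1 + z⁻¹ * q ^ (n + 1))) =
        (1 + q ^ (2 * n + 1)) * P + z * q ^ n * P + z⁻¹ * q ^ (n + 1) * P := by
      field_simp
      ring
    rw [hP]
    refine (congrArg (fun f => HasSum f _) (funext fun k => ?_)).mpr s
    · simp only [Function.comp_apply, Equiv.coe_addRight]
      have t1 : thetaTerm z q k = thetaTerm z q (k + -1) * (z * q ^ (k + -1)) := by
        rw [← thetaTerm_succ hz hq0]
        congr 1
        ring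
      have hp : poch q (2 * (n + 1)) =
          poch q (2 * n) * (1 - q ^ (2 * n + 1)) * (1 - q ^ (2 * n + 1 + 1)) := by
        rw [poch, show 2 * (n + 1) = 2 * n + 1 + 1 by ring, Finset.prod_range_succ,
          Finset.prod_range_succ, poch]
      push_cast
      set a := invPoch q ((n : ℤ) + 1 - k) with ha
      set b := invPoch q ((n : ℤ) + 1 + k) with hb
      have a1 : invPoch q (n - k) = (1 - q ^ ((n : ℤ) + 1 - k)) * a := by
        rw [ha, ← invPoch_sub_one hq]
        congr 1
        ring
      have a2 : invPoch q (n - (k + 1)) =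
          (1 - q ^ ((n : ℤ) - k)) * ((1 - q ^ ((n : ℤ) + 1 - k)) * a) := by
        rw [← a1, ← invPoch_sub_one hq]
        congr 1
        ring
      have a3 : invPoch q (n - (k + -1)) = a := by
        rw [ha]
        congr 1
        ring
      have b1 : invPoch q (n + k) = (1 - q ^ ((n : ℤ) + 1 + k)) * b := by
        rw [hb, ← invPoch_sub_one hq]
        congr 1
        ring
      have b2 : invPoch q (n + (k + -1)) =
          (1 - q ^ ((n : ℤ) + k)) * ((1 - q ^ ((n : ℤ) + 1 + k)) * b) := by
        rw [← b1, ← invPoch_sub_one hq]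
        congr 1
        ring
      have b3 : invPoch q (n + (k + 1)) = b := by
        rw [hb]
        congr 1
        ring
      rw [hp, a1, a2, a3, b1, b2, b3, thetaTerm_succ hz hq0 k, t1]
      simp only [zpow_add₀ hq0, zpow_sub₀ hq0, zpow_natCast, zpow_one, zpow_neg]
      have hk : q ^ k ≠ 0 := zpow_ne_zero _ hq0
      field_simp
      ring

lemma summable_thetaTerm_nat {z q : ℂ} (hz : z ≠ 0) (hq0 : q ≠ 0) (hq : ‖q‖ < 1) :
    Summable fun k : ℕ => ‖thetaTerm z q k‖ := by
  have hne (k : ℤ) : thetaTerm z q k ≠ 0 := mul_ne_zero (zpow_ne_zero _ hz) (zpow_ne_zero _ hq0)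
  refine summable_of_ratio_test_tendsto_lt_one zero_lt_one
    (Filter.Eventually.of_forall fun k => norm_ne_zero_iff.2 (hne k)) ?_
  have : Filter.Tendsto (fun k : ℕ => ‖z‖ * ‖q‖ ^ k) Filter.atTop (nhds (‖z‖ * 0)) :=
    (tendsto_pow_atTop_nhds_zero_of_lt_one (norm_nonneg _) hq).const_mul _
  rw [mul_zero] at this
  refine this.congr fun k => ?_
  push_cast
  rw [thetaTerm_succ hz hq0, norm_norm, norm_norm, norm_mul,
    mul_div_cancel_left₀ _ (norm_ne_zero_iff.2 (hne k))]
  simp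

lemma thetaTerm_neg (z : ℂ) {q : ℂ} (hq0 : q ≠ 0) (k : ℤ) :
    thetaTerm z q (-k) = thetaTerm (z⁻¹ * q) q k := by
  unfold thetaTerm
  have : -k * (-k - 1) / 2 = k + k * (k - 1) / 2 := by
    rw [add_comm, ← Int.add_mul_ediv_right _ _ (by norm_num)]
    ring_nf
  rw [this, zpow_add₀ hq0, mul_zpow, inv_zpow, zpow_neg, mul_assoc]

lemma summable_thetaTerm {z q : ℂ} (hz : z ≠ 0) (hq0 : q ≠ 0) (hq : ‖q‖ < 1) :
    Summable fun k : ℤ => ‖thetaTerm z q k‖ := by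
  refine Summable.of_nat_of_neg (summable_thetaTerm_nat hz hq0 hq) ?_
  simp only [thetaTerm_neg z hq0]
  exact summable_thetaTerm_nat (by positivity) hq0 hq

lemma tendsto_invPoch {q : ℂ} (hq : ‖q‖ < 1) {u : ℕ → ℤ}
    (hu : Filter.Tendsto u Filter.atTop Filter.atTop) :
    Filter.Tendsto (fun n => invPoch q (u n)) Filter.atTop (nhds (euler q)⁻¹) := by
  have h1 : Filter.Tendsto (fun m : ℤ => (poch q m.toNat)⁻¹) Filter.atTop (nhds (euler q)⁻¹) :=
    ((tendsto_poch hq).comp (Filter.tendsto_atTop.2 fun b =>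
      (Filter.eventually_ge_atTop (b : ℤ)).mono fun m hm => by omega)).inv₀ (euler_ne_zero hq)
  have h2 : Filter.Tendsto (invPoch q) Filter.atTop (nhds (euler q)⁻¹) :=
    h1.congr' ((Filter.eventually_ge_atTop 0).mono fun m hm => by simp [invPoch, hm])
  exact h2.comp hu

/-- **Jacobi's triple product identity**, the infinite product being written as the limit of its
partial products. -/
lemma jacobi_triple_product {z q : ℂ} (hz : z ≠ 0) (hq0 : q ≠ 0) (hq : ‖q‖ < 1) :
    Filter.Tendsto (fun n => ∏ i ∈ Finset.range n,
        ((1 + z * q ^ i) * (1 + z⁻¹ * q ^ (i + 1)) * (1 - q ^ (i + 1)))) Filter.atTop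
      (nhds (∑' k : ℤ, thetaTerm z q k)) := by
  -- Tannery: the finite identity has the summable majorant `B C² ‖thetaTerm z q k‖`
  obtain ⟨B, hB⟩ : ∃ B, ∀ n, ‖poch q n‖ ≤ B := by
    obtain ⟨B, hB⟩ := (Metric.isBounded_range_of_tendsto _ (tendsto_poch hq)).exists_norm_le
    exact ⟨B, fun n => hB _ ⟨n, rfl⟩⟩
  obtain ⟨C, hC⟩ : ∃ C, ∀ n, ‖(poch q n)⁻¹‖ ≤ C := by
    obtain ⟨C, hC⟩ := (Metric.isBounded_range_of_tendsto _
      ((tendsto_poch hq).inv₀ (euler_ne_zero hq))).exists_norm_le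
    exact ⟨C, fun n => hC _ ⟨n, rfl⟩⟩
  have hB0 : 0 ≤ B := (norm_nonneg _).trans (hB 0)
  have hC0 : 0 ≤ C := (norm_nonneg _).trans (hC 0)
  have hC' (m : ℤ) : ‖invPoch q m‖ ≤ C := by
    unfold invPoch
    split_ifs
    · exact hC _
    · simpa using hC0
  have lim := tendsto_tsum_of_dominated_convergence (𝓕 := Filter.atTop)
    (f := fun (n : ℕ) (k : ℤ) =>
      poch q (2 * n) * invPoch q (n - k) * invPoch q (n + k) * thetaTerm z q k)
    (g := fun k => euler q * (euler q)⁻¹ * (euler q)⁻¹ * thetaTerm z q k)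
    ((summable_thetaTerm hz hq0 hq).mul_left (B * C * C)) (fun k => ?_)
    (Filter.Eventually.of_forall fun n k => ?_)
  · simp only [(hasSum_finite_jtp hz hq0 hq _).tsum_eq] at lim
    have := lim.mul (tendsto_poch hq)
    simp only [poch, ← Finset.prod_mul_distrib] at this
    convert this using 2
    rw [tsum_mul_left]
    have := euler_ne_zero hq
    field_simp
  · refine Filter.Tendsto.mul_const _ (Filter.Tendsto.mul (Filter.Tendsto.mul ?_ ?_) ?_)
    · exact (tendsto_poch hq).comp (Filter.tendsto_id.const_mul_atTop' (by norm_num))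
    · exact tendsto_invPoch hq (Filter.tendsto_atTop_add_const_right _ (-k)
        tendsto_natCast_atTop_atTop)
    · exact tendsto_invPoch hq (Filter.tendsto_atTop_add_const_right _ k
        tendsto_natCast_atTop_atTop)
  · rw [norm_mul, norm_mul, norm_mul]
    gcongr
    · exact hB _
    · exact hC' _
    · exact hC' _

/-- Gauss's product formulas for `ψ(-x)` and `φ(-x²)`, multiplied together. -/
lemma euler_mul_euler {x : ℂ} (hx0 : x ≠ 0) (hx : ‖x‖ < 1) :
    euler x * euler (x ^ 2) =
      (∑' k : ℤ, thetaTerm (-x) (x ^ 4) k) * ∑' k : ℤ, thetaTerm (-x ^ 2) (x ^ 4) k := by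
  have hx4 : ‖x ^ 4‖ < 1 := by
    rw [norm_pow]
    exact pow_lt_one₀ (norm_nonneg _) hx (by norm_num)
  have hx2 : ‖x ^ 2‖ < 1 := by
    rw [norm_pow]
    exact pow_lt_one₀ (norm_nonneg _) hx (by norm_num)
  have j1 := jacobi_triple_product (neg_ne_zero.2 hx0) (pow_ne_zero 4 hx0) hx4
  have j2 := jacobi_triple_product (neg_ne_zero.2 (pow_ne_zero 2 hx0)) (pow_ne_zero 4 hx0) hx4
  have e1 := (tendsto_poch hx).comp
    ((Filter.tendsto_id (x := Filter.atTop)).const_mul_atTop' (show 0 < 4 by norm_num))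
  have e2 := (tendsto_poch hx2).comp
    ((Filter.tendsto_id (x := Filter.atTop)).const_mul_atTop' (show 0 < 2 by norm_num))
  refine tendsto_nhds_unique ((e1.mul e2).congr fun n => ?_) (j1.mul j2)
  simp only [Function.comp_apply, id_eq, poch]
  induction n with
  | zero => simp
  | succ n ih =>
    rw [show 4 * (n + 1) = 4 * n + 1 + 1 + 1 + 1 by ring, show 2 * (n + 1) = 2 * n + 1 + 1 by ring]
    simp only [Finset.prod_range_succ]
    have h3 : (-x)⁻¹ * (x ^ 4) ^ (n + 1) = - x ^ (4 * n + 3) := by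
      field_simp
      ring
    have h4 : (-x ^ 2)⁻¹ * (x ^ 4) ^ (n + 1) = - x ^ (4 * n + 2) := by
      field_simp
      ring
    simp only [h3, h4]
    linear_combination (1 - x ^ (4 * n + 1)) * (1 - x ^ (4 * n + 1 + 1)) *
      (1 - x ^ (4 * n + 1 + 1 + 1)) * (1 - x ^ (4 * n + 1 + 1 + 1 + 1)) *
      (1 - (x ^ 2) ^ (2 * n + 1)) * (1 - (x ^ 2) ^ (2 * n + 1 + 1)) * ih

/-! ### The eta quotient as a product of theta series -/

lemma hasSum_of_eq {β : Type*} {f g : β → ℂ} {a b : ℂ} (h : HasSum f a) (hf : ∀ x, g x = f x)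
    (hb : b = a) : HasSum g b := by
  rwa [hb, funext hf]

/-- A sum whose terms depend only on `f a` may be regrouped by the value of `f`. -/
lemma hasSum_fiber {α : Type*} (f : α → ℕ) (fin : ∀ n, {a | f a = n}.Finite) (g : ℕ → ℂ) {S : ℂ}
    (h : HasSum (fun a => g (f a)) S) : HasSum (fun n => ({a | f a = n}.ncard : ℂ) * g n) S := by
  refine ((Equiv.sigmaFiberEquiv f).hasSum_iff.2 h).sigma fun n => ?_
  have : Fintype {a // f a = n} := (fin n).fintype
  have hc : ({a | f a = n}.ncard : ℂ) * g n = ∑ c : {a // f a = n}, g (f c) := by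
    rw [Finset.sum_congr rfl fun c _ => by rw [c.2], Finset.sum_const, Finset.card_univ,
      nsmul_eq_mul, ← Nat.card_eq_fintype_card, ← Nat.card_coe_set_eq]
    rfl
  rw [hc]
  exact hasSum_fintype _

/-- The exponent of `q` in `q ψ(q²) ψ(q⁶)`: the form defining `tsol` at a pair of even integers. -/
def expT (p : ℤ × ℤ) : ℕ := (4 * p.1 ^ 2 - 2 * p.1 + 3 * (4 * p.2 ^ 2 - 2 * p.2) + 1).toNat

/-- The exponent of `q` in `φ(q⁴) φ(q¹²)`. -/
def expR (p : ℤ × ℤ) : ℕ := (4 * (p.1 ^ 2 + 3 * p.2 ^ 2)).toNat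

lemma expT_cast (p : ℤ × ℤ) :
    (expT p : ℤ) = 4 * p.1 ^ 2 - 2 * p.1 + 3 * (4 * p.2 ^ 2 - 2 * p.2) + 1 := by
  unfold expT
  have h1 := Int.le_self_sq p.1
  have h2 := Int.le_self_sq p.2
  have h3 := sq_nonneg p.1
  have h4 := sq_nonneg p.2
  omega

lemma expR_cast (p : ℤ × ℤ) : (expR p : ℤ) = 4 * (p.1 ^ 2 + 3 * p.2 ^ 2) :=
  Int.toNat_of_nonneg (by positivity)

lemma expT_finite (n : ℕ) : {p | expT p = n}.Finite := by
  have inj : Function.Injective fun p : ℤ × ℤ => (2 * p.1, 2 * p.2) := by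
    rintro ⟨x, y⟩ ⟨x', y'⟩ h
    simp only [Prod.mk.injEq] at h ⊢
    omega
  refine ((tsol_finite n).preimage inj.injOn).subset ?_
  rintro ⟨x, y⟩ h
  have := expT_cast (x, y)
  rw [show expT (x, y) = n from h] at this
  rw [Set.mem_preimage, mem_tsol, this]
  ring

/-- Reflecting either coordinate by `x ↦ 1 - x`, every solution is reached exactly once from one
with even coordinates. -/
lemma tcard_eq_expT (n : ℕ) : tcard n = 4 * {p | expT p = n}.ncard := by
  let E : (Bool × Bool) × (ℤ × ℤ) → ℤ × ℤ := fun t =>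
    (cond t.1.1 (2 * t.2.1) (1 - 2 * t.2.1), cond t.1.2 (2 * t.2.2) (1 - 2 * t.2.2))
  have hE : Function.Injective E := by
    rintro ⟨⟨b, c⟩, ⟨i, i'⟩⟩ ⟨⟨b₂, c₂⟩, ⟨i₂, i₂'⟩⟩ h
    simp only [E, Prod.mk.injEq] at h ⊢
    cases b <;> cases b₂ <;> cases c <;> cases c₂ <;> simp at h ⊢ <;> omega
  have val (b : Bool) (i : ℤ) : (cond b (2 * i) (1 - 2 * i)) ^ 2 - cond b (2 * i) (1 - 2 * i) =
      4 * i ^ 2 - 2 * i := by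
    cases b <;> simp only [cond_true, cond_false] <;> ring
  have him : tsol n = E '' (Set.univ ×ˢ {p | expT p = n}) := by
    ext ⟨x, y⟩
    simp only [Set.mem_ofPred_eq, Set.mem_image, Set.mem_prod, Set.mem_univ, true_and, mem_tsol]
    have par (x : ℤ) : ∃ (b : Bool) (i : ℤ), x = cond b (2 * i) (1 - 2 * i) := by
      obtain ⟨c, hc | hc⟩ := Int.even_or_odd' x
      · exact ⟨true, c, hc⟩
      · exact ⟨false, -c, by simp only [cond_false]; linarith⟩
    constructor
    · obtain ⟨b, i, rfl⟩ := par x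
      obtain ⟨c, i', rfl⟩ := par y
      intro h
      refine ⟨((b, c), (i, i')), ?_, rfl⟩
      rw [val, val] at h
      have := expT_cast (i, i')
      simp only at this ⊢
      omega
    · rintro ⟨⟨⟨b, c⟩, ⟨i, i'⟩⟩, h, he⟩
      simp only [E, Prod.mk.injEq] at he
      obtain ⟨rfl, rfl⟩ := he
      rw [val, val, ← h, expT_cast]
  have hc : (Set.univ : Set (Bool × Bool)).ncard = 4 := by
    rw [Set.ncard_univ, Nat.card_eq_fintype_card]; rfl
  rw [tcard, him, Set.ncard_image_of_injective _ hE, Set.ncard_prod, hc]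

lemma expR_finite (n : ℕ) : {p | expR p = n}.Finite := by
  refine (sol_finite (n / 4)).subset ?_
  rintro ⟨x, y⟩ h
  have := expR_cast (x, y)
  rw [show expR (x, y) = n from h] at this
  rw [mem_sol]
  simp only at this
  omega

lemma ncard_expR (n : ℕ) : {p | expR p = n}.ncard = if 4 ∣ n then rcard (n / 4) else 0 := by
  split_ifs with h
  · unfold rcard
    congr 1
    ext ⟨x, y⟩
    have := expR_cast (x, y)
    rw [mem_sol, Set.mem_ofPred_eq]
    simp only at this
    omega
  · rw [Set.ncard_eq_zero (expR_finite n), Set.eq_empty_iff_forall_notMem]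
    rintro ⟨x, y⟩ hxy
    have := expR_cast (x, y)
    rw [Set.mem_ofPred_eq] at hxy
    omega

lemma neg_pow_four_thetaTerm {x : ℂ} (hx : x ≠ 0) (k : ℤ) :
    thetaTerm (-x) (x ^ 4) k = (-1) ^ k * x ^ (2 * k ^ 2 - k) := by
  have h : 2 * k ^ 2 - k = k + 4 * (k * (k - 1) / 2) := by
    have := Int.mul_ediv_cancel' (Int.even_mul_pred_self k).two_dvd
    linarith
  rw [thetaTerm, h, zpow_add₀ hx, zpow_mul, neg_eq_neg_one_mul, mul_zpow, mul_assoc]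
  norm_cast

lemma neg_sq_thetaTerm {x : ℂ} (hx : x ≠ 0) (k : ℤ) :
    thetaTerm (-x ^ 2) (x ^ 4) k = (-1) ^ k * x ^ (2 * k ^ 2) := by
  have h : 2 * k ^ 2 = 2 * k + 4 * (k * (k - 1) / 2) := by
    have := Int.mul_ediv_cancel' (Int.even_mul_pred_self k).two_dvd
    linarith
  rw [thetaTerm, h, zpow_add₀ hx, zpow_mul, zpow_mul, neg_eq_neg_one_mul, mul_zpow, mul_assoc]
  norm_cast

lemma neg_one_zpow_congr {k l m : ℤ} (h : k = l + 2 * m) : (-1 : ℂ) ^ k = (-1) ^ l := by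
  rw [h, zpow_add₀ (by norm_num), zpow_mul]
  simp

/-- The coefficients of the eta quotient, as read off from its theta factorization. -/
noncomputable def cuspCoeff (n : ℕ) : ℤ :=
  ∑ ij ∈ Finset.HasAntidiagonal.antidiagonal n,
    (-1) ^ (ij.1 / 2) * ({p | expT p = ij.1}.ncard : ℤ) *
      ((-1) ^ (ij.2 / 4) * ({p | expR p = ij.2}.ncard : ℤ))

/-- The factorization `q ψ(-q²) ψ(-q⁶) φ(-q⁴) φ(-q¹²)`, expanded: the first three factors carry the
sign `(-1)^(i / 2)` at `q^i`, the last two the sign `(-1)^(j / 4)` at `q^j`. -/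
lemma hasSum_cuspCoeff {q : ℂ} (hq0 : q ≠ 0) (hq : ‖q‖ < 1) :
    HasSum (fun n => (cuspCoeff n : ℂ) * q ^ n)
      (q * (euler (q ^ 2) * euler (q ^ 4) * euler (q ^ 6) * euler (q ^ 12))) := by
  have hpow {m : ℕ} (hm : m ≠ 0) : ‖q ^ m‖ < 1 := by
    rw [norm_pow]
    exact pow_lt_one₀ (norm_nonneg _) hq hm
  have ne (m : ℕ) : q ^ m ≠ 0 := pow_ne_zero m hq0
  have e1 := euler_mul_euler (ne 2) (hpow two_ne_zero)
  have e2 := euler_mul_euler (ne 6) (hpow (by norm_num))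
  have sm {x : ℂ} (hx0 : x ≠ 0) (hx : ‖x‖ < 1) (z : ℂ) (hz : z ≠ 0) :
      Summable fun k : ℤ => ‖thetaTerm z (x ^ 4) k‖ :=
    summable_thetaTerm hz (pow_ne_zero 4 hx0) (by
      rw [norm_pow]
      exact pow_lt_one₀ (norm_nonneg _) hx (by norm_num))
  have s1 := sm (ne 2) (hpow two_ne_zero) (-q ^ 2) (neg_ne_zero.2 (ne 2))
  have s2 := sm (ne 6) (hpow (by norm_num)) (-q ^ 6) (neg_ne_zero.2 (ne 6))
  have s3 := sm (ne 2) (hpow two_ne_zero) (-(q ^ 2) ^ 2) (neg_ne_zero.2 (pow_ne_zero 2 (ne 2)))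
  have s4 := sm (ne 6) (hpow (by norm_num)) (-(q ^ 6) ^ 2) (neg_ne_zero.2 (pow_ne_zero 2 (ne 6)))
  have toZ (m : ℕ) (k : ℤ) : (q ^ m) ^ k = q ^ (m * k) := by
    rw [zpow_mul, zpow_natCast]
  have hU : HasSum (fun p : ℤ × ℤ => (-1 : ℂ) ^ (expT p / 2) * q ^ expT p)
      (q * ((∑' k : ℤ, thetaTerm (-q ^ 2) ((q ^ 2) ^ 4) k) *
        ∑' k : ℤ, thetaTerm (-q ^ 6) ((q ^ 6) ^ 4) k)) := by
    rw [tsum_mul_tsum_of_summable_norm s1 s2]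
    refine hasSum_of_eq ((summable_mul_of_summable_norm s1 s2).hasSum.mul_left q) ?_ rfl
    rintro ⟨a, b⟩
    have hp := expT_cast (a, b)
    simp only at hp ⊢
    rw [neg_pow_four_thetaTerm (ne 2), neg_pow_four_thetaTerm (ne 6), toZ, toZ,
      ← zpow_natCast q, hp, ← zpow_natCast (-1 : ℂ),
      neg_one_zpow_congr (l := a + b) (m := a ^ 2 - a + (3 * b ^ 2 - 2 * b)) (by omega),
      zpow_add₀ (by norm_num),
      show 4 * a ^ 2 - 2 * a + 3 * (4 * b ^ 2 - 2 * b) + 1 =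
        ((2 : ℕ) : ℤ) * (2 * a ^ 2 - a) + ((6 : ℕ) : ℤ) * (2 * b ^ 2 - b) + 1 by push_cast; ring,
      zpow_add_one₀ hq0, zpow_add₀ hq0]
    ring
  have hV : HasSum (fun p : ℤ × ℤ => (-1 : ℂ) ^ (expR p / 4) * q ^ expR p)
      ((∑' k : ℤ, thetaTerm (-(q ^ 2) ^ 2) ((q ^ 2) ^ 4) k) *
        ∑' k : ℤ, thetaTerm (-(q ^ 6) ^ 2) ((q ^ 6) ^ 4) k) := by
    rw [tsum_mul_tsum_of_summable_norm s3 s4]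
    refine hasSum_of_eq (summable_mul_of_summable_norm s3 s4).hasSum ?_ rfl
    rintro ⟨a, b⟩
    have hp := expR_cast (a, b)
    simp only at hp ⊢
    obtain ⟨m, hm⟩ := Int.even_mul_pred_self a
    obtain ⟨l, hl⟩ := Int.even_mul_pred_self b
    rw [neg_sq_thetaTerm (ne 2), neg_sq_thetaTerm (ne 6), toZ, toZ,
      ← zpow_natCast q, hp, ← zpow_natCast (-1 : ℂ),
      neg_one_zpow_congr (l := a + b) (m := m + l + b ^ 2) (by
        push_cast
        rw [hp, Int.mul_ediv_cancel_left _ (by norm_num)]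
        linarith),
      zpow_add₀ (by norm_num),
      show 4 * (a ^ 2 + 3 * b ^ 2) =
        ((2 : ℕ) : ℤ) * (2 * a ^ 2) + ((6 : ℕ) : ℤ) * (2 * b ^ 2) by push_cast; ring,
      zpow_add₀ hq0]
    ring
  have hU' := hasSum_fiber expT expT_finite (fun n => (-1 : ℂ) ^ (n / 2) * q ^ n) hU
  have hV' := hasSum_fiber expR expR_finite (fun n => (-1 : ℂ) ^ (n / 4) * q ^ n) hV
  have hprod := tsum_mul_tsum_eq_tsum_sum_antidiagonal_of_summable_norm
    hU'.summable.norm hV'.summable.norm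
  have hsum := (summable_norm_sum_mul_antidiagonal_of_summable_norm
    hU'.summable.norm hV'.summable.norm).of_norm.hasSum
  rw [← hprod, hU'.tsum_eq, hV'.tsum_eq] at hsum
  refine hasSum_of_eq hsum (fun n => ?_) ?_
  · rw [cuspCoeff]
    push_cast
    rw [Finset.sum_mul]
    refine Finset.sum_congr rfl fun ij hij => ?_
    rw [Finset.HasAntidiagonal.mem_antidiagonal] at hij
    rw [← hij, pow_add]
    ring
  · rw [show q ^ 4 = (q ^ 2) ^ 2 by ring, show q ^ 12 = (q ^ 6) ^ 2 by ring]
    linear_combination q * euler (q ^ 6) * euler ((q ^ 6) ^ 2) * e1 +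
      q * (∑' k : ℤ, thetaTerm (-q ^ 2) ((q ^ 2) ^ 4) k) *
        (∑' k : ℤ, thetaTerm (-(q ^ 2) ^ 2) ((q ^ 2) ^ 4) k) * e2

/-! ### The two parts of the count -/

/-- Two coefficient sequences with the same sum near `0` agree. The sequence `a` is only known
through the values of `∑'`, so its summability is recovered from the sum being nonzero. -/
lemma eq_of_tsum_eq {a b : ℕ → ℤ} {f : ℂ → ℂ} (hf : ∀ q : ℂ, q ≠ 0 → ‖q‖ < 1 → f q ≠ 0)
    (ha : ∀ q : ℂ, q ≠ 0 → ‖q‖ < 1 → ∑' k, (a k : ℂ) * q ^ k = f q)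
    (hb : ∀ q : ℂ, q ≠ 0 → ‖q‖ < 1 → HasSum (fun k => (b k : ℂ) * q ^ k) (f q))
    (h0 : a 0 = b 0) : a = b := by
  have hd (q : ℂ) (hq : ‖q‖ < 1) : HasSum (fun k => q ^ k * ((a k : ℂ) - b k)) 0 := by
    rcases eq_or_ne q 0 with rfl | hq0
    · convert hasSum_zero (α := ℂ) (β := ℕ) using 2 with k
      cases k <;> simp [h0]
    · have hs : Summable fun k => (a k : ℂ) * q ^ k := by
        by_contra hs
        exact hf q hq0 hq (by rw [← ha q hq0 hq, tsum_eq_zero_of_not_summable hs])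
      have h := hs.hasSum.sub (hb q hq0 hq)
      rw [ha q hq0 hq, sub_self] at h
      exact hasSum_of_eq h (fun k => by ring) rfl
  have hz : HasFPowerSeriesAt (fun _ : ℂ => (0 : ℂ))
      (FormalMultilinearSeries.ofScalars ℂ fun k => (a k : ℂ) - b k) 0 := by
    rw [hasFPowerSeriesAt_iff]
    filter_upwards [Metric.ball_mem_nhds (0 : ℂ) one_pos] with q hq
    simpa [FormalMultilinearSeries.coeff_ofScalars] using hd q (by simpa using hq)
  funext k
  have h2 : (a k : ℂ) - b k = 0 := by
    rw [← FormalMultilinearSeries.coeff_ofScalars (𝕜 := ℂ) (p := fun k => (a k : ℂ) - b k) (n := k),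
      hz.eq_zero]
    rfl
  exact_mod_cast sub_eq_zero.1 h2

lemma tprod_eq_euler {q : ℂ} (hq : ‖q‖ < 1) :
    ∏' k : ℕ, ((1 - q ^ (2 * (k + 1))) * (1 - q ^ (4 * (k + 1))) *
      (1 - q ^ (6 * (k + 1))) * (1 - q ^ (12 * (k + 1)))) =
      euler (q ^ 2) * euler (q ^ 4) * euler (q ^ 6) * euler (q ^ 12) := by
  have hm (m : ℕ) (hm : m ≠ 0) : Multipliable fun k : ℕ => 1 - (q ^ m) ^ (k + 1) :=
    ModularForm.multipliable_one_sub_pow (by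
      rw [norm_pow]
      exact pow_lt_one₀ (norm_nonneg _) hq hm)
  have h2 := hm 2 (by norm_num)
  have h4 := hm 4 (by norm_num)
  have h6 := hm 6 (by norm_num)
  have h12 := hm 12 (by norm_num)
  simp only [pow_mul, euler]
  rw [((h2.mul h4).mul h6).tprod_mul h12, (h2.mul h4).tprod_mul h6, h2.tprod_mul h4]

/-- The cuspidal part: the signed count is a coefficient of the eta quotient. -/
lemma four_mul_cuspCoeff (n : ℕ) :
    4 * (-1) ^ n * cuspCoeff (2 * n + 5) =
      ∑ ij ∈ Finset.HasAntidiagonal.antidiagonal (2 * n + 5),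
        (tcard ij.1 * if 4 ∣ ij.2 then (-1 : ℤ) ^ (ij.2 / 4) * rcard (ij.2 / 4) else 0 : ℤ) := by
  rw [cuspCoeff, Finset.mul_sum]
  refine Finset.sum_congr rfl fun ij hij => ?_
  rw [Finset.HasAntidiagonal.mem_antidiagonal] at hij
  rw [tcard_eq_expT, ncard_expR]
  split_ifs with h
  · obtain ⟨D, hD⟩ := h
    -- `A + 4D = 2n + 5` forces `(A - 1) / 2 ≡ n` modulo `2`.
    have hs : (-1 : ℤ) ^ (ij.1 / 2) = (-1) ^ n := by
      rw [show n = ij.1 / 2 + 2 * D - 2 by omega]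
      rcases le_or_gt 2 (ij.1 / 2 + 2 * D) with h | h
      · obtain ⟨c, hc⟩ := Nat.exists_eq_add_of_le h
        rw [hc, Nat.add_sub_cancel_left]
        have := congrArg (fun m => (-1 : ℤ) ^ m) hc
        simpa [pow_add, pow_mul] using this
      · omega
    have hn : ((-1 : ℤ) ^ n) * (-1) ^ n = 1 := by
      rw [← mul_pow]
      simp
    rw [hs]
    push_cast
    linear_combination (4 * ({p | expT p = ij.1}.ncard : ℤ) *
      ((-1) ^ (ij.2 / 4) * rcard (ij.2 / 4))) * hn
  · simp

theorem stmt_7 (n : ℕ) (hn : 0 < n) (β n₁ : ℕ) (hn₁ : 0 < n₁) (h3 : ¬ 3 ∣ n₁)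
    (hfac : 2 * n + 5 = 3 ^ β * n₁) (a : ℕ → ℤ)
    (ha : ∀ q : ℂ, ‖q‖ < 1 →
      ∑' k : ℕ, (a k : ℂ) * q ^ k =
        q * ∏' k : ℕ, ((1 - q ^ (2 * (k + 1))) * (1 - q ^ (4 * (k + 1))) *
          (1 - q ^ (6 * (k + 1))) * (1 - q ^ (12 * (k + 1))))) :
    (tquad 1 3 4 12 n : ℤ) =
      2 * (∑ d ∈ n₁.divisors, (d : ℤ) - (-1 : ℤ) ^ n * a (2 * n + 5)) := by
  have hac : a = cuspCoeff := by
    refine eq_of_tsum_eq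
      (f := fun q => q * (euler (q ^ 2) * euler (q ^ 4) * euler (q ^ 6) * euler (q ^ 12)))
      (fun q hq0 hq => ?_) (fun q hq0 hq => by rw [ha q hq, tprod_eq_euler hq])
      (fun q hq0 hq => hasSum_cuspCoeff hq0 hq) ?_
    · have hne (m : ℕ) (hm : m ≠ 0) : euler (q ^ m) ≠ 0 := euler_ne_zero (by
        rw [norm_pow]
        exact pow_lt_one₀ (norm_nonneg _) hq hm)
      have h2 := hne 2 (by norm_num)
      have h4 := hne 4 (by norm_num)
      have h6 := hne 6 (by norm_num)
      have h12 := hne 12 (by norm_num)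
      positivity
    · have h := ha 0 (by simp)
      rw [tsum_eq_single 0 fun k hk => by simp [hk]] at h
      have ha0 : a 0 = 0 := by simpa using h
      have := tcard_eq_expT 0
      rw [tcard_even (by simp)] at this
      simp [ha0, cuspCoeff, show {p | expT p = 0}.ncard = 0 by omega]
  have h1 := two_mul_tquad n
  rw [← four_mul_cuspCoeff, sum_tcard_mul_rcard (by grind), divisors_not_three h3 hn₁ hfac,
    ← hac] at h1
  linarith
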